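/- Suppose there exist real numbers θ > 1, σ > 1 and r₀ > 0 such that ∫_1^∞ (g_θ(t)·t)^{−1/p} dt < ∞, ∫_1^∞ g_θ(t)^{−1/α} dt < ∞, and ∫_{r₀}^∞ (r·f_σ(r))^{1/(p−1)} dr = ∞. Then every nonnegative C¹ solution u of the differential inequality div A(x,Du) + b(x)|Du|^α ≥ q(x)g(u) in ℝⁿ is identically zero. -/

import Mathlib

open MeasureTheory Metric Set Filter
open scoped RealInnerProductSpace ENNReal

noncomputable section

abbrev Euc (n : ℕ) := EuclideanSpace ℝ (Fin n)

/-- Weak solution of `div A(x,Dv) + b(x)|Dv|^α ≥ a(x)` on an open set `U`: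
for every nonnegative test function `φ ∈ C₀^∞(U)`,
`-∫ A(x,Dv)·Dφ + ∫ b |Dv|^α φ ≥ ∫ a φ`. -/
def IsWeakSol {n : ℕ} (A : Euc n → Euc n → Euc n) (b : Euc n → ℝ) (α : ℝ)
    (a : Euc n → ℝ) (U : Set (Euc n)) (v : Euc n → ℝ) : Prop :=
  ∀ φ : Euc n → ℝ, ContDiff ℝ (⊤ : ℕ∞) φ → HasCompactSupport φ → tsupport φ ⊆ U →
    (∀ x, 0 ≤ φ x) →
    (∫ x in U, a x * φ x) ≤
      (-(∫ x in U, ⟪A x (gradient v x), gradient φ x⟫)) +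
        ∫ x in U, b x * ‖gradient v x‖ ^ α * φ x

/-- Structural conditions on `A`: measurability, coercivity and growth. -/
def StructCond {n : ℕ} (A : Euc n → Euc n → Euc n) (p C₁ C₂ : ℝ) : Prop :=
  Measurable (Function.uncurry A) ∧
    ∀ x ζ : Euc n, C₁ * ‖ζ‖ ^ p ≤ ⟪ζ, A x ζ⟫ ∧ ‖A x ζ‖ ≤ C₂ * ‖ζ‖ ^ (p - 1)

/-- Locally bounded function on `ℝⁿ`. -/
def LocBdd {n : ℕ} (b : Euc n → ℝ) : Prop :=
  ∀ K : Set (Euc n), IsCompact K → ∃ C, ∀ x ∈ K, b x ≤ C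

/-- `M(r; u) = max_{|x| = r} u x`. -/
def sphMax {n : ℕ} (u : Euc n → ℝ) (r : ℝ) : ℝ := sSup (u '' Metric.sphere (0 : Euc n) r)

/-- `g_θ(t) = inf_{s ∈ (t/θ, θ t)} g s`. -/
def ginf (g : ℝ → ℝ) (θ t : ℝ) : ℝ := sInf (g '' Set.Ioo (t / θ) (θ * t))

/-- The open annulus `{x : r₁ < |x| < r₂}`. -/
def Ann (n : ℕ) (r₁ r₂ : ℝ) : Set (Euc n) := {x : Euc n | r₁ < ‖x‖ ∧ ‖x‖ < r₂}

/-- `q_σ(r) = ess inf_{r/σ < |x| < σ r} q x`. -/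
def qinf {n : ℕ} (q : Euc n → ℝ) (σ r : ℝ) : ℝ :=
  essInf q (volume.restrict (Ann n (r / σ) (σ * r)))

/-- `f_σ(r) = q_σ(r) / (1 + r q_σ(r)^{(α-p+1)/α} ess sup_{r/σ<|x|<σr} b^{(p-1)/α})`. -/
def fdef {n : ℕ} (q b : Euc n → ℝ) (p α σ r : ℝ) : ℝ :=
  qinf q σ r /
    (1 + r * qinf q σ r ^ ((α - p + 1) / α) *
      essSup (fun x => b x ^ ((p - 1) / α)) (volume.restrict (Ann n (r / σ) (σ * r))))

/-!
Suppose `u x₀ > 0`. The maximum principle makes the spherical maximum `M r` of `u` nondecreasing.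
Let `z` be a point of the sphere of radius `r` with `u z = M r`, and suppose that `u ≤ M r + δ` on
`ball z ρ`. Subtracting a paraboloid from `u` gives a function whose positive part lives in the
ball, and the energy inequality together with a De Giorgi iteration over its superlevel sets yields
`Q H ρ ^ p ≤ K δ ^ (p - 1)`, where `Q ≤ q` and `H ≤ g ∘ u` near `z`, as long as the gradient term
is absorbed by the coercivity. Violating this inequality by a suitable choice of `δ` and `ρ`
therefore gives `M r + δ ≤ M (r + ρ)`.

The integrability conditions on `g_θ` provide a bounded nondecreasing `G` that turns every such
rise into an increase of `Φ = G ∘ M`: over a geometric shell starting at radius `R`, the function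
`Φ` gains a fixed multiple of `min (R (R f_σ)^(1/(p-1))) 1`. Since `Φ` is bounded, the integral of
`(r f_σ(r))^(1/(p-1))` converges, contrary to the hypothesis.
-/

open scoped Gradient Convolution Topology

section RealInequalities

variable {B C N d p w x y a b α : ℝ}

lemma rpow_mul_rpow_le_add (hx : 0 ≤ x) (hy : 0 ≤ y) (ha : 0 ≤ a) (hb : 0 ≤ b) :
    x ^ a * y ^ b ≤ x ^ (a + b) + y ^ (a + b) := by
  rcases le_total x y with h | h
  · calc x ^ a * y ^ b ≤ y ^ a * y ^ b := by gcongr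
      _ = y ^ (a + b) := (Real.rpow_add_of_nonneg hy ha hb).symm
      _ ≤ x ^ (a + b) + y ^ (a + b) := le_add_of_nonneg_left (by positivity)
  · calc x ^ a * y ^ b ≤ x ^ a * x ^ b := by gcongr
      _ = x ^ (a + b) := (Real.rpow_add_of_nonneg hx ha hb).symm
      _ ≤ x ^ (a + b) + y ^ (a + b) := le_add_of_nonneg_right (by positivity)

lemma mul_rpow_sub_one_mul_le (hp : 1 ≤ p) (hB : 0 ≤ B) (hC : 0 < C) (hN : 0 ≤ N) (hw : 0 ≤ w) :
    B * N ^ (p - 1) * w ≤ C * N ^ p + C * (B / C) ^ p * w ^ p := by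
  have h := rpow_mul_rpow_le_add hN (show 0 ≤ B / C * w by positivity)
    (sub_nonneg.2 hp) zero_le_one
  rw [Real.rpow_one, sub_add_cancel, Real.mul_rpow (by positivity) hw] at h
  calc B * N ^ (p - 1) * w = C * (N ^ (p - 1) * (B / C * w)) := by field_simp
    _ ≤ C * (N ^ p + (B / C) ^ p * w ^ p) := by gcongr
    _ = C * N ^ p + C * (B / C) ^ p * w ^ p := by ring

lemma rpow_le_rpow_add_rpow_sub_mul (hN : 0 ≤ N) (hd : 0 < d) (hα : 0 ≤ α) (hαp : α ≤ p) :
    N ^ α ≤ d ^ α + d ^ (α - p) * N ^ p := by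
  have h := rpow_mul_rpow_le_add hN hd.le hα (sub_nonneg.2 hαp)
  rw [add_sub_cancel] at h
  calc N ^ α = d ^ (α - p) * (N ^ α * d ^ (p - α)) := by
        rw [mul_left_comm, ← Real.rpow_add hd]; simp
    _ ≤ d ^ (α - p) * (N ^ p + d ^ p) := by gcongr
    _ = d ^ α + d ^ (α - p) * N ^ p := by
        rw [mul_add, ← Real.rpow_add hd, sub_add_cancel, add_comm]

end RealInequalities

section TestFunctions

variable {E : Type*} [NormedAddCommGroup E] [InnerProductSpace ℝ E] [FiniteDimensional ℝ E]
  {φ ψ f : E → ℝ} {F : E → E} {K : Set E}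

lemma continuous_gradient (hφ : ContDiff ℝ 1 φ) : Continuous (∇ φ) :=
  (LinearIsometryEquiv.continuous _).comp (hφ.continuous_fderiv one_ne_zero)

lemma gradient_eq_zero_of_notMem_isClosed (hK : IsClosed K) (hφ : ∀ x ∉ K, φ x = 0) {x : E}
    (hx : x ∉ K) : ∇ φ x = 0 := by
  have h : φ =ᶠ[𝓝 x] fun _ => 0 :=
    Filter.eventually_of_mem (hK.isOpen_compl.mem_nhds hx) hφ
  rw [gradient, h.fderiv_eq]
  simp

lemma hasCompactSupport_gradient (hc : HasCompactSupport φ) : HasCompactSupport (∇ φ) :=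
  HasCompactSupport.intro hc fun _ hx =>
    gradient_eq_zero_of_notMem_isClosed (isClosed_tsupport φ)
      (fun _ hy => image_eq_zero_of_notMem_tsupport hy) hx

variable [MeasurableSpace E] [BorelSpace E]

lemma locallyIntegrable_of_bounded_on_compacts {V : Type*} [NormedAddCommGroup V] {f : E → V}
    (hm : AEStronglyMeasurable f) (hb : ∀ K, IsCompact K → ∃ C, ∀ x ∈ K, ‖f x‖ ≤ C) :
    LocallyIntegrable f := by
  refine locallyIntegrable_iff.2 fun K hK => ?_
  obtain ⟨C, hC⟩ := hb K hK
  exact .of_bound hK.measure_lt_top hm.restrict C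
    ((ae_restrict_iff' hK.measurableSet).2 (.of_forall hC))

lemma integrable_mul_of_hasCompactSupport (hf : LocallyIntegrable f) (hφ : Continuous φ)
    (hc : HasCompactSupport φ) : Integrable fun x => f x * φ x :=
  hf.integrable_smul_right_of_hasCompactSupport hφ hc

lemma integrable_inner_gradient (hF : LocallyIntegrable F) (hφ : ContDiff ℝ 1 φ)
    (hc : HasCompactSupport φ) : Integrable fun x => ⟪F x, ∇ φ x⟫ := by
  have hgrad := continuous_gradient hφ
  refine ((hF.integrable_smul_left_of_hasCompactSupport hgrad.norm
    (hasCompactSupport_gradient hc).norm).norm).mono'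
    (hF.aestronglyMeasurable.inner hgrad.aestronglyMeasurable) (.of_forall fun x => ?_)
  rw [norm_smul, norm_norm, mul_comm]
  exact norm_inner_le_norm _ _

lemma integrable_mul_add_inner_gradient (hf : LocallyIntegrable f) (hF : LocallyIntegrable F)
    (hφ : ContDiff ℝ 1 φ) (hc : HasCompactSupport φ) :
    Integrable fun x => f x * φ x + ⟪F x, ∇ φ x⟫ :=
  (integrable_mul_of_hasCompactSupport hf hφ.continuous hc).add (integrable_inner_gradient hF hφ hc)

lemma abs_integral_mul_add_inner_gradient_sub_le (hf : LocallyIntegrable f)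
    (hF : LocallyIntegrable F) (hK : IsCompact K) (hφ : ContDiff ℝ 1 φ) (hψ : ContDiff ℝ 1 ψ)
    (hφK : ∀ x ∉ K, φ x = 0) (hψK : ∀ x ∉ K, ψ x = 0) {ε : ℝ} (hval : ∀ x, |ψ x - φ x| ≤ ε)
    (hgrad : ∀ x, ‖∇ ψ x - ∇ φ x‖ ≤ ε) :
    |(∫ x, f x * ψ x + ⟪F x, ∇ ψ x⟫) - ∫ x, f x * φ x + ⟪F x, ∇ φ x⟫|
      ≤ ε * ∫ x in K, (|f x| + ‖F x‖) := by
  rw [← integral_sub (integrable_mul_add_inner_gradient hf hF hψ (.intro hK hψK))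
      (integrable_mul_add_inner_gradient hf hF hφ (.intro hK hφK)),
    ← setIntegral_eq_integral_of_forall_compl_eq_zero (s := K) fun x hx => by
      simp [hφK x hx, hψK x hx, gradient_eq_zero_of_notMem_isClosed hK.isClosed hφK hx,
        gradient_eq_zero_of_notMem_isClosed hK.isClosed hψK hx],
    ← integral_const_mul, ← Real.norm_eq_abs]
  refine norm_integral_le_of_norm_le (((hf.integrableOn_isCompact hK).norm.add
    (hF.integrableOn_isCompact hK).norm).const_mul ε) (.of_forall fun x => ?_)
  calc ‖f x * ψ x + ⟪F x, ∇ ψ x⟫ - (f x * φ x + ⟪F x, ∇ φ x⟫)‖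
      = ‖f x * (ψ x - φ x) + ⟪F x, ∇ ψ x - ∇ φ x⟫‖ := by rw [inner_sub_right]; ring_nf
    _ ≤ |f x| * |ψ x - φ x| + ‖F x‖ * ‖∇ ψ x - ∇ φ x‖ := by
        refine (norm_add_le _ _).trans (add_le_add ?_ (norm_inner_le_norm _ _))
        rw [norm_mul, Real.norm_eq_abs, Real.norm_eq_abs]
    _ ≤ |f x| * ε + ‖F x‖ * ε := by gcongr <;> grind
    _ = ε * (|f x| + ‖F x‖) := by ring

lemma fderiv_normed_convolution (η : ContDiffBump (0 : E)) (hφ : ContDiff ℝ 1 φ)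
    (hc : HasCompactSupport φ) (x : E) :
    fderiv ℝ (η.normed volume ⋆[ContinuousLinearMap.lsmul ℝ ℝ, volume] φ) x
      = (η.normed volume ⋆[ContinuousLinearMap.lsmul ℝ ℝ, volume] fderiv ℝ φ) x := by
  rw [(hc.hasFDerivAt_convolution_right (ContinuousLinearMap.lsmul ℝ ℝ) (μ := volume)
    η.continuous_normed.locallyIntegrable hφ x).fderiv, convolution_def, convolution_def]
  rfl

lemma normed_convolution_eq_zero {η : ContDiffBump (0 : E)} {x : E}
    (hx : x ∉ cthickening η.rOut (tsupport φ)) :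
    (η.normed volume ⋆[ContinuousLinearMap.lsmul ℝ ℝ, volume] φ) x = 0 := by
  by_contra hne
  have h := support_convolution_subset (ContinuousLinearMap.lsmul ℝ ℝ) hne
  rw [η.support_normed_eq, ball_add_zero] at h
  exact hx (thickening_subset_cthickening _ _ (thickening_subset_of_subset _ subset_closure h))

lemma exists_smooth_nonneg_approx (hφ : ContDiff ℝ 1 φ) (hc : HasCompactSupport φ)
    (h0 : ∀ x, 0 ≤ φ x) {ε : ℝ} (hε : 0 < ε) :
    ∃ ψ : E → ℝ, ContDiff ℝ (⊤ : ℕ∞) ψ ∧ (∀ x, 0 ≤ ψ x) ∧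
      (∀ x ∉ cthickening 1 (tsupport φ), ψ x = 0) ∧
      (∀ x, |ψ x - φ x| ≤ ε) ∧ ∀ x, ‖∇ ψ x - ∇ φ x‖ ≤ ε := by
  have hφ' := hφ.continuous_fderiv one_ne_zero
  obtain ⟨d₁, hd₁, hval⟩ := Metric.uniformContinuous_iff.1
    (hc.uniformContinuous_of_continuous hφ.continuous) ε hε
  obtain ⟨d₂, hd₂, hder⟩ := Metric.uniformContinuous_iff.1
    ((hc.fderiv ℝ).uniformContinuous_of_continuous hφ') ε hε
  set d := min 1 (min d₁ d₂)
  have hd : 0 < d := by positivity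
  have hdd₁ : d ≤ d₁ := (min_le_right _ _).trans (min_le_left _ _)
  have hdd₂ : d ≤ d₂ := (min_le_right _ _).trans (min_le_right _ _)
  let η : ContDiffBump (0 : E) := ⟨d / 2, d, by positivity, by linarith⟩
  refine ⟨η.normed volume ⋆[ContinuousLinearMap.lsmul ℝ ℝ, volume] φ,
    η.hasCompactSupport_normed.contDiff_convolution_left _ η.contDiff_normed
      hφ.continuous.locallyIntegrable, fun x => ?_, fun x hx => ?_, fun x => ?_, fun x => ?_⟩
  · rw [convolution_def]
    exact integral_nonneg fun t => mul_nonneg (η.nonneg_normed _) (h0 _)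
  · exact normed_convolution_eq_zero fun h => hx (cthickening_mono (min_le_left _ _) _ h)
  · exact η.dist_normed_convolution_le hφ.continuous.aestronglyMeasurable
      fun y hy => (hval ((mem_ball.1 hy).trans_le hdd₁)).le
  · rw [gradient, gradient, ← map_sub, LinearIsometryEquiv.norm_map, ← dist_eq_norm,
      fderiv_normed_convolution η hφ hc]
    exact η.dist_normed_convolution_le hφ'.aestronglyMeasurable
      fun y hy => (hder ((mem_ball.1 hy).trans_le hdd₂)).le

lemma integral_mul_add_inner_gradient_nonpos_of_smooth (hf : LocallyIntegrable f)
    (hF : LocallyIntegrable F)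
    (hsmooth : ∀ ψ : E → ℝ, ContDiff ℝ (⊤ : ℕ∞) ψ → HasCompactSupport ψ → (∀ x, 0 ≤ ψ x) →
      ∫ x, f x * ψ x + ⟪F x, ∇ ψ x⟫ ≤ 0)
    (hφ : ContDiff ℝ 1 φ) (hc : HasCompactSupport φ) (h0 : ∀ x, 0 ≤ φ x) :
    ∫ x, f x * φ x + ⟪F x, ∇ φ x⟫ ≤ 0 := by
  set K := cthickening 1 (tsupport φ)
  have hK : IsCompact K := hc.isCompact.cthickening
  have hφK : ∀ x ∉ K, φ x = 0 := fun x hx =>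
    image_eq_zero_of_notMem_tsupport fun h => hx (self_subset_cthickening _ h)
  set I := ∫ x in K, (|f x| + ‖F x‖)
  have hbound : ∀ ε > 0, ∫ x, f x * φ x + ⟪F x, ∇ φ x⟫ ≤ ε * I := by
    intro ε hε
    obtain ⟨ψ, hψ, hψ0, hψK, hval, hgrad⟩ := exists_smooth_nonneg_approx hφ hc h0 hε
    have hclose := abs_integral_mul_add_inner_gradient_sub_le hf hF hK hφ
      (hψ.of_le (by exact_mod_cast le_top)) hφK hψK hval hgrad
    linarith [neg_le_of_abs_le hclose, hsmooth ψ hψ (.intro hK hψK) hψ0]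
  have hlim : Tendsto (fun ε : ℝ => ε * I) (𝓝[>] 0) (𝓝 0) := by
    simpa using ((continuous_id.mul_const I).tendsto 0).mono_left nhdsWithin_le_nhds
  exact ge_of_tendsto hlim (by filter_upwards [self_mem_nhdsWithin] with ε hε using hbound ε hε)

end TestFunctions

section Truncation

lemma hasDerivAt_max_zero_rpow {s : ℝ} (hs : 1 < s) (t : ℝ) :
    HasDerivAt (fun t : ℝ => max t 0 ^ s) (s * max t 0 ^ (s - 1)) t := by
  rcases lt_trichotomy t 0 with ht | rfl | ht
  · have hzero : (fun t : ℝ => max t 0 ^ s) =ᶠ[𝓝 t] fun _ => 0 := by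
      filter_upwards [Iio_mem_nhds ht] with y hy
      rw [max_eq_right (le_of_lt hy), Real.zero_rpow (by linarith)]
    rw [max_eq_right ht.le, Real.zero_rpow (by linarith), mul_zero]
    exact (hasDerivAt_const t (0 : ℝ)).congr_of_eventuallyEq hzero
  · have habs := hasDerivAt_abs_rpow 0 hs
    have hs0 : s ≠ 0 := by linarith
    rw [max_self, Real.zero_rpow (by linarith), mul_zero]
    simp only [mul_zero] at habs
    rw [hasDerivAt_iff_isLittleO] at habs ⊢
    refine (Asymptotics.IsBigO.of_bound 1 (.of_forall fun y => ?_)).trans_isLittleO habs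
    simp only [max_self, Real.zero_rpow hs0, sub_zero, smul_zero, abs_zero, one_mul]
    rw [Real.norm_of_nonneg (by positivity), Real.norm_of_nonneg (by positivity)]
    gcongr
    exact max_le (le_abs_self y) (abs_nonneg y)
  · have hself : (fun t : ℝ => max t 0 ^ s) =ᶠ[𝓝 t] fun t => t ^ s := by
      filter_upwards [Ioi_mem_nhds ht] with y hy
      rw [max_eq_left (le_of_lt hy)]
    rw [max_eq_left ht.le]
    exact (Real.hasDerivAt_rpow_const (Or.inr hs.le)).congr_of_eventuallyEq hself

lemma contDiff_max_zero_rpow {s : ℝ} (hs : 1 < s) :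
    ContDiff ℝ 1 fun t : ℝ => max t 0 ^ s := by
  rw [contDiff_one_iff_deriv, funext fun t => (hasDerivAt_max_zero_rpow hs t).deriv]
  exact ⟨fun t => (hasDerivAt_max_zero_rpow hs t).differentiableAt,
    continuous_const.mul (.rpow_const (by fun_prop) fun _ => Or.inr (by linarith))⟩

/-- The positive part of `W` on `U`, extended by zero. -/
def posPartOn {E : Type*} (U : Set E) (W : E → ℝ) : E → ℝ :=
  U.indicator fun x => max (W x) 0

lemma posPartOn_nonneg {E : Type*} (U : Set E) (W : E → ℝ) (x : E) : 0 ≤ posPartOn U W x :=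
  indicator_nonneg (fun _ _ => le_max_right _ _) x

lemma posPartOn_of_mem {E : Type*} {U : Set E} {x : E} (W : E → ℝ) (hx : x ∈ U) :
    posPartOn U W x = max (W x) 0 :=
  indicator_of_mem hx _

lemma posPartOn_of_notMem {E : Type*} {U : Set E} {x : E} (W : E → ℝ) (hx : x ∉ U) :
    posPartOn U W x = 0 :=
  indicator_of_notMem hx _

lemma mem_of_posPartOn_ne_zero {E : Type*} {U : Set E} {W : E → ℝ} {x : E}
    (hx : posPartOn U W x ≠ 0) : x ∈ U :=
  mem_of_indicator_ne_zero hx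

lemma posPartOn_eq_self_of_ne_zero {E : Type*} {U : Set E} {W : E → ℝ} {x : E}
    (hx : posPartOn U W x ≠ 0) : posPartOn U W x = W x := by
  have hxU := posPartOn_of_mem W (mem_of_posPartOn_ne_zero hx)
  rw [hxU] at hx ⊢
  exact max_eq_left (le_of_not_ge fun h => hx (max_eq_right h))

variable {E : Type*} [NormedAddCommGroup E] [InnerProductSpace ℝ E] {U : Set E} {W : E → ℝ}

/-- The positive part of the `C¹` function `W` on the open set `U` lives on a compact subset of `U`,
so that its powers with exponent greater than `1`, extended by zero, are `C¹` test functions. -/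
structure IsTruncatable (U : Set E) (W : E → ℝ) : Prop where
  contDiff : ContDiff ℝ 1 W
  isOpen : IsOpen U
  exists_isCompact : ∃ K ⊆ U, IsCompact K ∧ ∀ x ∈ U, x ∉ K → W x ≤ 0

namespace IsTruncatable

variable (h : IsTruncatable U W)
include h

lemma hasCompactSupport_posPartOn : HasCompactSupport (posPartOn U W) := by
  obtain ⟨K, -, hK, hWK⟩ := h.exists_isCompact
  refine .intro hK fun x hx => ?_
  by_cases hxU : x ∈ U
  · rw [posPartOn_of_mem W hxU, max_eq_right (hWK x hxU hx)]
  · exact posPartOn_of_notMem W hxU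

lemma eventuallyEq_of_mem {x : E} (hx : x ∈ U) : posPartOn U W =ᶠ[𝓝 x] fun y => max (W y) 0 :=
  Filter.eventually_of_mem (h.isOpen.mem_nhds hx) fun _ hy => posPartOn_of_mem W hy

lemma eventuallyEq_of_notMem {x : E} (hx : x ∉ U) : posPartOn U W =ᶠ[𝓝 x] fun _ => 0 := by
  obtain ⟨K, hKU, hK, hWK⟩ := h.exists_isCompact
  filter_upwards [hK.isClosed.isOpen_compl.mem_nhds fun hxK => hx (hKU hxK)] with y hy
  by_cases hyU : y ∈ U
  · rw [posPartOn_of_mem W hyU, max_eq_right (hWK y hyU hy)]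
  · exact posPartOn_of_notMem W hyU

lemma continuous_posPartOn : Continuous (posPartOn U W) := by
  refine continuous_iff_continuousAt.2 fun x => ?_
  by_cases hx : x ∈ U
  · exact (h.contDiff.continuous.max continuous_const).continuousAt.congr
      (h.eventuallyEq_of_mem hx).symm
  · exact continuousAt_const.congr (h.eventuallyEq_of_notMem hx).symm

lemma hasCompactSupport_posPartOn_rpow {s : ℝ} (hs : s ≠ 0) :
    HasCompactSupport fun x => posPartOn U W x ^ s :=
  h.hasCompactSupport_posPartOn.comp_left (g := fun t : ℝ => t ^ s) (Real.zero_rpow hs)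

lemma contDiff_posPartOn_rpow {s : ℝ} (hs : 1 < s) :
    ContDiff ℝ 1 fun x => posPartOn U W x ^ s := by
  refine contDiff_iff_contDiffAt.2 fun x => ?_
  by_cases hx : x ∈ U
  · exact ((contDiff_max_zero_rpow hs).comp h.contDiff).contDiffAt.congr_of_eventuallyEq
      ((h.eventuallyEq_of_mem hx).fun_comp (· ^ s))
  · exact contDiffAt_const.congr_of_eventuallyEq
      ((h.eventuallyEq_of_notMem hx).fun_comp (· ^ s))

lemma contDiff_posPartOn_sq : ContDiff ℝ 1 fun x => posPartOn U W x ^ 2 := by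
  simpa only [Real.rpow_two] using h.contDiff_posPartOn_rpow one_lt_two

variable [FiniteDimensional ℝ E]

lemma gradient_posPartOn_rpow {s : ℝ} (hs : 1 < s) (x : E) :
    ∇ (fun x => posPartOn U W x ^ s) x = (s * posPartOn U W x ^ (s - 1)) • ∇ W x := by
  by_cases hx : x ∈ U
  · have hd := (hasDerivAt_max_zero_rpow hs (W x)).comp_hasFDerivAt x
      (h.contDiff.differentiable one_ne_zero x).hasFDerivAt
    have hd' : HasFDerivAt (fun x => posPartOn U W x ^ s) _ x :=
      hd.congr_of_eventuallyEq ((h.eventuallyEq_of_mem hx).fun_comp (· ^ s))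
    rw [gradient, hd'.fderiv, posPartOn_of_mem W hx, map_smul, gradient]
  · have hd : HasFDerivAt (fun x => posPartOn U W x ^ s) (0 : E →L[ℝ] ℝ) x :=
      (hasFDerivAt_const (𝕜 := ℝ) ((0 : ℝ) ^ s) x).congr_of_eventuallyEq
        ((h.eventuallyEq_of_notMem hx).fun_comp (· ^ s))
    rw [gradient, hd.fderiv, posPartOn_of_notMem W hx, Real.zero_rpow (by linarith)]
    simp

lemma gradient_posPartOn_sq (x : E) :
    ∇ (fun x => posPartOn U W x ^ 2) x = (2 * posPartOn U W x) • ∇ W x := by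
  have hgrad := h.gradient_posPartOn_rpow one_lt_two x
  norm_num only [Real.rpow_two, Real.rpow_one] at hgrad
  exact hgrad

variable [MeasurableSpace E] [BorelSpace E]

lemma integrable_mul_posPartOn_pow {f : E → ℝ} (hf : Continuous f) {k : ℕ} (hk : k ≠ 0) :
    Integrable fun x => f x * posPartOn U W x ^ k :=
  integrable_mul_of_hasCompactSupport hf.locallyIntegrable (h.continuous_posPartOn.pow k)
    (h.hasCompactSupport_posPartOn.comp_left (g := fun t : ℝ => t ^ k) (zero_pow hk))

end IsTruncatable

lemma isTruncatable_sub_const {u : E → ℝ} {κ : ℝ} (hu : ContDiff ℝ 1 u) (hU : IsOpen U)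
    (hcompact : IsCompact (closure U)) (hκ : ∀ z ∈ frontier U, u z < κ) :
    IsTruncatable U fun x => u x - κ where
  contDiff := hu.sub contDiff_const
  isOpen := hU
  exists_isCompact := by
    refine ⟨closure U ∩ {x | κ ≤ u x}, fun x hx => ?_,
      hcompact.inter_right (isClosed_le continuous_const hu.continuous), fun x hxU hx => ?_⟩
    · by_contra hxU
      exact (hκ x ⟨hx.1, by rwa [hU.interior_eq]⟩).not_ge hx.2
    · by_contra! hlt
      exact hx ⟨subset_closure hxU, (sub_pos.1 hlt).le⟩

end Truncation

section Subsolutions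

variable {E : Type*} [NormedAddCommGroup E] [InnerProductSpace ℝ E] [FiniteDimensional ℝ E]
  [MeasurableSpace E] [BorelSpace E]

/-- `u` is a `C¹` weak solution of `div F + b |∇u|^α ≥ a` on `E`, where the field `F` satisfies the
`p`-coercivity and growth conditions relative to `∇u`; for the inequality of the theorem
`F x = A x (∇ u x)` and `a x = q x * g (u x)`. The inequality is tested with `C¹` functions. -/
structure IsSubsolution (p C₁ C₂ α : ℝ) (F : E → E) (a b u : E → ℝ) : Prop where
  one_lt_p : 1 < p
  C₁_pos : 0 < C₁
  C₂_nonneg : 0 ≤ C₂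
  p_sub_one_le_α : p - 1 ≤ α
  α_le_p : α ≤ p
  contDiff : ContDiff ℝ 1 u
  coercive : ∀ x, C₁ * ‖∇ u x‖ ^ p ≤ ⟪∇ u x, F x⟫
  growth : ∀ x, ‖F x‖ ≤ C₂ * ‖∇ u x‖ ^ (p - 1)
  a_nonneg : ∀ x, 0 ≤ a x
  b_nonneg : ∀ x, 0 ≤ b x
  b_bddOn_compact : ∀ K, IsCompact K → ∃ B, ∀ x ∈ K, b x ≤ B
  locallyIntegrable_field : LocallyIntegrable F
  locallyIntegrable_source : LocallyIntegrable fun x => a x - b x * ‖∇ u x‖ ^ α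
  weak : ∀ φ : E → ℝ, ContDiff ℝ 1 φ → HasCompactSupport φ → (∀ x, 0 ≤ φ x) →
    ∫ x, (a x - b x * ‖∇ u x‖ ^ α) * φ x + ⟪F x, ∇ φ x⟫ ≤ 0

variable {p C₁ C₂ α : ℝ} {F : E → E} {a b u W H : E → ℝ} {U : Set E}

lemma IsSubsolution.integral_nonpos_of_le_tested (D : IsSubsolution p C₁ C₂ α F a b u)
    (hW : IsTruncatable U W) (hH : Integrable H)
    (hle : ∀ᵐ x, H x ≤ (a x - b x * ‖∇ u x‖ ^ α) * posPartOn U W x ^ 2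
      + 2 * posPartOn U W x * ⟪F x, ∇ W x⟫) :
    ∫ x, H x ≤ 0 := by
  have hcompact : HasCompactSupport fun x => posPartOn U W x ^ 2 :=
    hW.hasCompactSupport_posPartOn.comp_left (g := fun t : ℝ => t ^ 2) (by norm_num)
  refine (integral_mono_ae hH (integrable_mul_add_inner_gradient D.locallyIntegrable_source
    D.locallyIntegrable_field hW.contDiff_posPartOn_sq hcompact) ?_).trans
    (D.weak _ hW.contDiff_posPartOn_sq hcompact fun _ => by positivity)
  filter_upwards [hle] with x hx
  rwa [hW.gradient_posPartOn_sq, inner_smul_right]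

end Subsolutions

section EnergyEstimate

variable {E : Type*} [NormedAddCommGroup E] [InnerProductSpace ℝ E] [FiniteDimensional ℝ E]
  {p C₁ C₂ α m d h η t : ℝ} {F : E → E} {a b u W : E → ℝ} {U : Set E}

lemma gradient_sub_const (W : E → ℝ) (η : ℝ) : ∇ (fun x => W x - η) = ∇ W := by
  funext x
  rw [gradient, gradient, fderiv_sub_const]

variable [MeasurableSpace E] [BorelSpace E]

/-- The volume of the part of `U` where `W` exceeds `t`. -/
def superlevelVolume (U : Set E) (W : E → ℝ) (t : ℝ) : ℝ :=
  volume.real {x ∈ U | t < W x}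

/-- `W` is a truncatable perturbation of `u` on `U` with height at most `m` and gradient error at
most `d`, so small that the term `b |∇u|^α` can be absorbed by the coercivity of the field; `h` is a
lower bound of the source `a` where `W` is positive. The energy estimates hold for such `W`. -/
structure IsPerturbation (p C₁ α : ℝ) (a b u : E → ℝ) (U : Set E) (W : E → ℝ) (m d h : ℝ) :
    Prop where
  truncatable : IsTruncatable U W
  d_pos : 0 < d
  m_pos : 0 < m
  le_m : ∀ x ∈ U, W x ≤ m
  norm_gradient_sub_le : ∀ x ∈ U, ‖∇ W x - ∇ u x‖ ≤ d
  absorb : ∀ᵐ x, x ∈ U → b x * m * d ^ (α - p) ≤ C₁ / 2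
  le_source : ∀ᵐ x, x ∈ U → 0 < W x → h ≤ a x

/-- The constant on the right-hand side of the energy estimate `IsPerturbation.energy_le`. -/
def energyConst (p C₁ C₂ : ℝ) : ℝ :=
  C₁ / 2 * ((4 * C₂ / C₁) ^ p + 1)

lemma energyConst_pos (hC₁ : 0 < C₁) (hC₂ : 0 ≤ C₂) : 0 < energyConst p C₁ C₂ := by
  unfold energyConst; positivity

/-- The constant in the `L¹` gradient bound
`IsPerturbation.integral_norm_gradient_posPartOn_sq_le`. -/
def gradientConst (p C₁ C₂ : ℝ) : ℝ :=
  4 + 2 * (energyConst p C₁ C₂ / C₁)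

lemma gradientConst_pos (hC₁ : 0 < C₁) (hC₂ : 0 ≤ C₂) : 0 < gradientConst p C₁ C₂ := by
  have := energyConst_pos (p := p) hC₁ hC₂
  unfold gradientConst; positivity

namespace IsPerturbation

lemma posPartOn_le (hW : IsPerturbation p C₁ α a b u U W m d h) (x : E) :
    posPartOn U W x ≤ m := by
  by_cases hx : x ∈ U
  · rw [posPartOn_of_mem W hx]; exact max_le (hW.le_m x hx) hW.m_pos.le
  · rw [posPartOn_of_notMem W hx]; exact hW.m_pos.le

lemma sub_const (hW : IsPerturbation p C₁ α a b u U W m d h) (hη : 0 ≤ η) :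
    IsPerturbation p C₁ α a b u U (fun x => W x - η) m d h where
  truncatable :=
    { contDiff := hW.truncatable.contDiff.sub contDiff_const
      isOpen := hW.truncatable.isOpen
      exists_isCompact := by
        obtain ⟨K, hKU, hK, hWK⟩ := hW.truncatable.exists_isCompact
        exact ⟨K, hKU, hK, fun x hxU hxK => by linarith [hWK x hxU hxK]⟩ }
  d_pos := hW.d_pos
  m_pos := hW.m_pos
  le_m x hx := by linarith [hW.le_m x hx]
  norm_gradient_sub_le x hx := by
    rw [gradient_sub_const]; exact hW.norm_gradient_sub_le x hx
  absorb := hW.absorb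
  le_source := by
    filter_upwards [hW.le_source] with x hx hxU hxW
    exact hx hxU (by linarith)

end IsPerturbation

lemma IsSubsolution.mul_rpow_le_two_mul_inner (D : IsSubsolution p C₁ C₂ α F a b u) {x ξ : E}
    (hd : 0 < d) (hξ : ‖ξ - ∇ u x‖ ≤ d) :
    3 / 2 * C₁ * ‖∇ u x‖ ^ p - C₁ / 2 * (4 * C₂ / C₁) ^ p * d ^ p ≤ 2 * ⟪F x, ξ⟫ := by
  have hC₁ := D.C₁_pos
  have hC₂ := D.C₂_nonneg
  have hyoung := mul_rpow_sub_one_mul_le (p := p) D.one_lt_p.le (mul_nonneg zero_le_two hC₂)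
    (half_pos hC₁) (norm_nonneg (∇ u x)) hd.le
  rw [show 2 * C₂ / (C₁ / 2) = 4 * C₂ / C₁ by ring] at hyoung
  have hfield : |⟪F x, ξ - ∇ u x⟫| ≤ C₂ * ‖∇ u x‖ ^ (p - 1) * d :=
    (abs_real_inner_le_norm _ _).trans
      (mul_le_mul (D.growth x) hξ (norm_nonneg _) (by positivity))
  have hcoercive := D.coercive x
  rw [inner_sub_right, real_inner_comm (∇ u x)] at hfield
  linarith [neg_abs_le (⟪F x, ξ⟫ - ⟪∇ u x, F x⟫)]

namespace IsPerturbation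

variable (D : IsSubsolution p C₁ C₂ α F a b u) (hW : IsPerturbation p C₁ α a b u U W m d h)
include D hW

lemma mul_rpow_mul_posPartOn_le {x : E} (hx : b x * m * d ^ (α - p) ≤ C₁ / 2) :
    b x * ‖∇ u x‖ ^ α * posPartOn U W x ≤ C₁ / 2 * (d ^ p + ‖∇ u x‖ ^ p) := by
  have hd := hW.d_pos
  have hsplit := rpow_le_rpow_add_rpow_sub_mul (norm_nonneg (∇ u x)) hd
    (by linarith [D.p_sub_one_le_α, D.one_lt_p]) D.α_le_p
  have hbx := D.b_nonneg x
  calc b x * ‖∇ u x‖ ^ α * posPartOn U W x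
      ≤ b x * (d ^ α + d ^ (α - p) * ‖∇ u x‖ ^ p) * m := by
        gcongr
        exacts [posPartOn_nonneg U W x, hW.posPartOn_le x]
    _ = b x * m * d ^ (α - p) * (d ^ p + ‖∇ u x‖ ^ p) := by
        rw [mul_add _ (d ^ p), mul_assoc _ _ (d ^ p), ← Real.rpow_add hd, sub_add_cancel]; ring
    _ ≤ C₁ / 2 * (d ^ p + ‖∇ u x‖ ^ p) := by gcongr

lemma energy_integrand_le : ∀ᵐ x,
    h * posPartOn U W x ^ 2 + C₁ * (‖∇ u x‖ ^ p * posPartOn U W x)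
        - energyConst p C₁ C₂ * d ^ p * posPartOn U W x
      ≤ (a x - b x * ‖∇ u x‖ ^ α) * posPartOn U W x ^ 2
        + 2 * posPartOn U W x * ⟪F x, ∇ W x⟫ := by
  filter_upwards [hW.absorb, hW.le_source] with x habsorb hsource
  by_cases hv : posPartOn U W x = 0
  · simp [hv]
  have hxU := mem_of_posPartOn_ne_zero hv
  have hv0 := posPartOn_nonneg U W x
  have hh : h ≤ a x := hsource hxU
    (posPartOn_eq_self_of_ne_zero hv ▸ hv0.lt_of_ne' hv)
  have hflux := D.mul_rpow_le_two_mul_inner hW.d_pos (hW.norm_gradient_sub_le x hxU)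
  have hlower := hW.mul_rpow_mul_posPartOn_le D (habsorb hxU)
  have hsum := mul_le_mul_of_nonneg_left (add_le_add hflux (neg_le_neg hlower)) hv0
  have hmain : h * posPartOn U W x ^ 2 ≤ a x * posPartOn U W x ^ 2 := by gcongr
  rw [energyConst]
  linarith

lemma energy_le :
    h * (∫ x, posPartOn U W x ^ 2) + C₁ * ∫ x, ‖∇ u x‖ ^ p * posPartOn U W x
      ≤ energyConst p C₁ C₂ * d ^ p * ∫ x, posPartOn U W x := by
  have hT := hW.truncatable
  have hsq : Integrable fun x => posPartOn U W x ^ 2 := by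
    simpa using hT.integrable_mul_posPartOn_pow (continuous_const (y := (1 : ℝ))) two_ne_zero
  have hone : Integrable fun x => posPartOn U W x := by
    simpa using hT.integrable_mul_posPartOn_pow (continuous_const (y := (1 : ℝ))) one_ne_zero
  have hgrad : Integrable fun x => ‖∇ u x‖ ^ p * posPartOn U W x := by
    simpa using hT.integrable_mul_posPartOn_pow ((continuous_gradient D.contDiff).norm.rpow_const
      fun _ => Or.inr (by linarith [D.one_lt_p])) one_ne_zero
  have hint := D.integral_nonpos_of_le_tested hT
    (((hsq.const_mul h).add (hgrad.const_mul C₁)).sub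
      (hone.const_mul (energyConst p C₁ C₂ * d ^ p))) (hW.energy_integrand_le D)
  rw [integral_sub' ((hsq.const_mul h).add (hgrad.const_mul C₁)) (hone.const_mul _),
    integral_add' (hsq.const_mul h) (hgrad.const_mul C₁)] at hint
  simp only [integral_const_mul] at hint
  linarith

end IsPerturbation
end EnergyEstimate

section SuperlevelVolume

variable {E : Type*} [NormedAddCommGroup E] [InnerProductSpace ℝ E] [FiniteDimensional ℝ E]
  [MeasurableSpace E] [BorelSpace E] {p C₁ C₂ α m d h η t : ℝ} {F : E → E} {a b u W : E → ℝ}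
  {U : Set E}

lemma superlevelVolume_nonneg : 0 ≤ superlevelVolume U W t := measureReal_nonneg

lemma superlevelVolume_sub_const (U : Set E) (W : E → ℝ) (η t : ℝ) :
    superlevelVolume U (fun x => W x - η) t = superlevelVolume U W (η + t) := by
  simp only [superlevelVolume, lt_sub_iff_add_lt']

namespace IsTruncatable

variable (hT : IsTruncatable U W)
include hT

lemma volume_superlevel_lt_top (ht : 0 ≤ t) : volume {x ∈ U | t < W x} < ⊤ := by
  obtain ⟨K, -, hK, hWK⟩ := hT.exists_isCompact
  refine (measure_mono fun x hx => ?_).trans_lt hK.measure_lt_top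
  by_contra hxK
  exact absurd (hWK x hx.1 hxK) (by linarith [hx.2])

lemma superlevelVolume_anti (ht : 0 ≤ t) (hη : 0 ≤ η) :
    superlevelVolume U W (t + η) ≤ superlevelVolume U W t :=
  measureReal_mono (fun _ hx => ⟨hx.1, by linarith [hx.2]⟩) (hT.volume_superlevel_lt_top ht).ne

lemma superlevelVolume_le_posPartOn_sq (hη : 0 < η) :
    superlevelVolume U W η ≤ volume.real {x | η ^ 2 ≤ |posPartOn U W x ^ 2|} := by
  have hcompact : HasCompactSupport fun x => posPartOn U W x ^ 2 :=
    hT.hasCompactSupport_posPartOn.comp_left (g := fun t : ℝ => t ^ 2) (by norm_num)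
  refine measureReal_mono (fun x hx => ?_) ((measure_mono fun x hx => ?_).trans_lt
    hcompact.isCompact.measure_lt_top).ne
  · rw [mem_ofPred_eq, posPartOn_of_mem W hx.1, abs_of_nonneg (by positivity)]
    gcongr
    exact hx.2.le.trans (le_max_left _ _)
  · refine subset_tsupport _ fun h0 => ?_
    rw [mem_ofPred_eq, h0, abs_zero] at hx
    nlinarith

lemma sq_mul_superlevelVolume_le (hη : 0 < η) :
    η ^ 2 * superlevelVolume U W η ≤ ∫ x, posPartOn U W x ^ 2 := by
  have hsq : Integrable fun x => posPartOn U W x ^ 2 := by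
    simpa using hT.integrable_mul_posPartOn_pow (continuous_const (y := (1 : ℝ))) two_ne_zero
  have hmarkov := mul_meas_ge_le_integral_of_nonneg
    (.of_forall fun x => sq_nonneg (posPartOn U W x)) hsq (η ^ 2)
  refine le_trans ?_ hmarkov
  gcongr
  simpa only [abs_pow, sq_abs] using hT.superlevelVolume_le_posPartOn_sq hη

end IsTruncatable

namespace IsPerturbation

lemma integral_posPartOn_le (hW : IsPerturbation p C₁ α a b u U W m d h) :
    ∫ x, posPartOn U W x ≤ m * superlevelVolume U W 0 := by
  have hT := hW.truncatable
  have hmeas : MeasurableSet {x ∈ U | 0 < W x} :=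
    (hT.isOpen.inter (isOpen_lt continuous_const hT.contDiff.continuous)).measurableSet
  have hint : Integrable fun x => posPartOn U W x := by
    simpa using hT.integrable_mul_posPartOn_pow (continuous_const (y := (1 : ℝ))) one_ne_zero
  have hle : ∀ x, posPartOn U W x ≤ {x ∈ U | 0 < W x}.indicator (fun _ => m) x := by
    intro x
    by_cases hv : posPartOn U W x = 0
    · rw [hv]; exact indicator_nonneg (fun _ _ => hW.m_pos.le) x
    · have hpos := (posPartOn_nonneg U W x).lt_of_ne' hv
      rw [posPartOn_eq_self_of_ne_zero hv] at hpos
      rw [indicator_of_mem (show x ∈ {x ∈ U | 0 < W x} from ⟨mem_of_posPartOn_ne_zero hv, hpos⟩)]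
      exact hW.posPartOn_le x
  have hmono := integral_mono hint ((integrable_indicator_iff hmeas).2
    (integrableOn_const (hT.volume_superlevel_lt_top le_rfl).ne)) hle
  rwa [integral_indicator_const _ hmeas, smul_eq_mul, mul_comm] at hmono

variable (D : IsSubsolution p C₁ C₂ α F a b u) (hW : IsPerturbation p C₁ α a b u U W m d h)
  (hh : 0 ≤ h)
include D hW hh

lemma mul_sq_mul_superlevelVolume_le (hη : 0 < η) :
    h * η ^ 2 * superlevelVolume U W η
      ≤ energyConst p C₁ C₂ * d ^ p * m * superlevelVolume U W 0 := by
  have hK := energyConst_pos (p := p) D.C₁_pos D.C₂_nonneg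
  have hd := hW.d_pos
  have hgrad : 0 ≤ C₁ * ∫ x, ‖∇ u x‖ ^ p * posPartOn U W x :=
    mul_nonneg D.C₁_pos.le (integral_nonneg fun x =>
      mul_nonneg (by positivity) (posPartOn_nonneg U W x))
  calc h * η ^ 2 * superlevelVolume U W η
      = h * (η ^ 2 * superlevelVolume U W η) := mul_assoc _ _ _
    _ ≤ h * ∫ x, posPartOn U W x ^ 2 := by
        gcongr; exact hW.truncatable.sq_mul_superlevelVolume_le hη
    _ ≤ energyConst p C₁ C₂ * d ^ p * ∫ x, posPartOn U W x := by linarith [hW.energy_le D]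
    _ ≤ energyConst p C₁ C₂ * d ^ p * (m * superlevelVolume U W 0) := by
        gcongr; exact hW.integral_posPartOn_le
    _ = _ := by ring

omit hh in
lemma norm_gradient_posPartOn_sq_le (x : E) :
    ‖∇ (fun x => posPartOn U W x ^ 2) x‖
      ≤ 4 * d * posPartOn U W x + 2 * d ^ (1 - p) * (‖∇ u x‖ ^ p * posPartOn U W x) := by
  have hv := posPartOn_nonneg U W x
  rw [hW.truncatable.gradient_posPartOn_sq, norm_smul, Real.norm_of_nonneg (by positivity)]
  by_cases hv0 : posPartOn U W x = 0
  · simp [hv0]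
  have hsplit := rpow_le_rpow_add_rpow_sub_mul (norm_nonneg (∇ u x)) hW.d_pos zero_le_one
    D.one_lt_p.le
  rw [Real.rpow_one, Real.rpow_one] at hsplit
  have htriangle : ‖∇ W x‖ ≤ 2 * d + d ^ (1 - p) * ‖∇ u x‖ ^ p := by
    linarith [norm_le_norm_add_norm_sub' (∇ W x) (∇ u x),
      hW.norm_gradient_sub_le x (mem_of_posPartOn_ne_zero hv0)]
  linarith [mul_le_mul_of_nonneg_left htriangle hv]

lemma integral_norm_gradient_posPartOn_sq_le :
    ∫ x, ‖∇ (fun x => posPartOn U W x ^ 2) x‖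
      ≤ gradientConst p C₁ C₂ * d * ∫ x, posPartOn U W x := by
  have hC₁ := D.C₁_pos
  have hd := hW.d_pos
  have hT := hW.truncatable
  have hone : Integrable fun x => posPartOn U W x := by
    simpa using hT.integrable_mul_posPartOn_pow (continuous_const (y := (1 : ℝ))) one_ne_zero
  have hgrad : Integrable fun x => ‖∇ u x‖ ^ p * posPartOn U W x := by
    simpa using hT.integrable_mul_posPartOn_pow ((continuous_gradient D.contDiff).norm.rpow_const
      fun _ => Or.inr (by linarith [D.one_lt_p])) one_ne_zero
  have henergy : ∫ x, ‖∇ u x‖ ^ p * posPartOn U W x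
      ≤ energyConst p C₁ C₂ * d ^ p * (∫ x, posPartOn U W x) / C₁ := by
    have : 0 ≤ h * ∫ x, posPartOn U W x ^ 2 :=
      mul_nonneg hh (integral_nonneg fun x => sq_nonneg _)
    rw [le_div_iff₀' hC₁]
    linarith [hW.energy_le D]
  have hpow : d ^ (1 - p) * d ^ p = d := by
    rw [← Real.rpow_add hd, sub_add_cancel, Real.rpow_one]
  have hint := integral_mono_of_nonneg (.of_forall fun x => norm_nonneg _)
    ((hone.const_mul (4 * d)).add (hgrad.const_mul (2 * d ^ (1 - p))))
    (.of_forall (hW.norm_gradient_posPartOn_sq_le D))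
  rw [integral_add' (hone.const_mul _) (hgrad.const_mul _), integral_const_mul,
    integral_const_mul] at hint
  calc _ ≤ _ := hint
    _ ≤ 4 * d * (∫ x, posPartOn U W x) + 2 * d ^ (1 - p)
          * (energyConst p C₁ C₂ * d ^ p * (∫ x, posPartOn U W x) / C₁) := by gcongr
    _ = _ := by
        rw [gradientConst]
        linear_combination (2 * energyConst p C₁ C₂ * (∫ x, posPartOn U W x) / C₁) * hpow

end IsPerturbation
end SuperlevelVolume

section Sobolev

variable {E : Type*} [NormedAddCommGroup E] [InnerProductSpace ℝ E] [FiniteDimensional ℝ E]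

lemma enorm_gradient (f : E → ℝ) (x : E) : ‖∇ f x‖ₑ = ‖fderiv ℝ f x‖ₑ := by
  rw [gradient, LinearIsometryEquiv.enorm_map]

variable [MeasurableSpace E] [BorelSpace E] {s : ℝ}
  (hs : (Module.finrank ℝ E : ℝ).HolderConjugate s)
include hs

lemma exists_eLpNorm_le_integral_norm_gradient :
    ∃ S : ℝ, 0 ≤ S ∧ ∀ f : E → ℝ, ContDiff ℝ 1 f → HasCompactSupport f →
      eLpNorm f (ENNReal.ofReal s) volume ≤ ENNReal.ofReal (S * ∫ x, ‖∇ f x‖) := by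
  refine ⟨eLpNormLESNormFDerivOneConst (volume : Measure E) s, by positivity, fun f hf hc => ?_⟩
  have hsobolev := eLpNorm_le_eLpNorm_fderiv_one (volume : Measure E) hf hc
    (p := s.toNNReal) (by
      rw [← NNReal.holderConjugate_coe_iff, NNReal.coe_natCast, Real.coe_toNNReal _ hs.symm.nonneg]
      exact hs)
  have hgrad : Integrable (∇ f) :=
    (continuous_gradient hf).integrable_of_hasCompactSupport (hasCompactSupport_gradient hc)
  rw [ENNReal.ofReal_mul (by positivity), ofReal_integral_norm_eq_lintegral_enorm hgrad,
    ENNReal.ofReal_coe_nnreal]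
  simp only [enorm_gradient]
  rwa [Real.coe_toNNReal _ hs.symm.nonneg, eLpNorm_one_eq_lintegral_enorm] at hsobolev

lemma exists_rpow_mul_measureReal_le :
    ∃ S : ℝ, 0 < S ∧ ∀ f : E → ℝ, ContDiff ℝ 1 f → HasCompactSupport f → ∀ η, 0 ≤ η →
      η ^ s * volume.real {x | η ≤ |f x|} ≤ (S * ∫ x, ‖∇ f x‖) ^ s := by
  obtain ⟨S, hS, hSobolev⟩ := exists_eLpNorm_le_integral_norm_gradient hs
  refine ⟨S + 1, by linarith, fun f hf hc η hη => ?_⟩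
  have hs0 := hs.symm.pos
  have hgrad : 0 ≤ ∫ x, ‖∇ f x‖ := integral_nonneg fun _ => norm_nonneg _
  have hint : 0 ≤ (S + 1) * ∫ x, ‖∇ f x‖ := by positivity
  have hweak := mul_meas_ge_le_pow_eLpNorm' volume (ENNReal.ofReal_ne_zero_iff.2 hs0)
    ENNReal.ofReal_ne_top hf.continuous.aestronglyMeasurable (ENNReal.ofReal η)
  have hstrong := hweak.trans (ENNReal.rpow_le_rpow ((hSobolev f hf hc).trans
    (ENNReal.ofReal_le_ofReal (by linarith : _ ≤ (S + 1) * ∫ x, ‖∇ f x‖))) (by positivity))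
  rw [ENNReal.toReal_ofReal hs0.le, ENNReal.ofReal_rpow_of_nonneg hη hs0.le,
    ENNReal.ofReal_rpow_of_nonneg hint hs0.le] at hstrong
  have hset : {x | ENNReal.ofReal η ≤ ‖f x‖ₑ} = {x | η ≤ |f x|} := by
    ext x
    rw [mem_ofPred_eq, mem_ofPred_eq, Real.enorm_eq_ofReal_abs,
      ENNReal.ofReal_le_ofReal_iff (abs_nonneg _)]
  have hreal := ENNReal.toReal_mono ENNReal.ofReal_ne_top hstrong
  rwa [ENNReal.toReal_mul, ENNReal.toReal_ofReal (by positivity),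
    ENNReal.toReal_ofReal (by positivity), hset] at hreal

end Sobolev

section LevelIteration

variable {A B L s v : ℝ} {V : ℝ → ℝ}

lemma mul_rpow_le_of_le_rpow (hs : 1 < s) (hB : 0 < B) (hv : 0 ≤ v)
    (hle : v ≤ ((4 : ℝ) ^ (-(1 / (s - 1))) / B) ^ (s / (s - 1))) :
    (B * v) ^ s ≤ (4 : ℝ) ^ (-(s / (s - 1))) * v := by
  have hs1 : 0 < s - 1 := by linarith
  have hpow : v ^ (s - 1) ≤ (4 : ℝ) ^ (-(s / (s - 1))) / B ^ s := by
    refine (Real.rpow_le_rpow hv hle hs1.le).trans_eq ?_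
    rw [← Real.rpow_mul (by positivity), div_mul_cancel₀ _ hs1.ne',
      Real.div_rpow (by positivity) hB.le, ← Real.rpow_mul (by norm_num)]
    congr 2
    ring
  calc (B * v) ^ s = B ^ s * v ^ (s - 1) * v := by
        rw [Real.mul_rpow hB.le hv, mul_assoc, ← Real.rpow_add_one' hv (by linarith),
          sub_add_cancel]
    _ ≤ B ^ s * ((4 : ℝ) ^ (-(s / (s - 1))) / B ^ s) * v := by gcongr
    _ = (4 : ℝ) ^ (-(s / (s - 1))) * v := by field_simp

lemma le_mul_pow_of_step {y : ℕ → ℝ} (hs : 1 < s) (hB : 0 ≤ B) (hy : ∀ j, 0 ≤ y j)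
    (hstep : ∀ j, y (j + 1) ≤ (B * 4 ^ j * y j) ^ s)
    (h0 : (B * y 0) ^ s ≤ (4 : ℝ) ^ (-(s / (s - 1))) * y 0) (j : ℕ) :
    y j ≤ y 0 * ((4 : ℝ) ^ (-(s / (s - 1)))) ^ j := by
  set κ : ℝ := (4 : ℝ) ^ (-(s / (s - 1))) with hκ
  have hs1 : 0 < s - 1 := by linarith
  have : 0 < κ := by positivity
  have hexp : 1 + -(s / (s - 1)) = -(1 / (s - 1)) := by field_simp; ring
  have hfix : (4 * κ) ^ s = κ := by
    rw [hκ, ← Real.rpow_one_add' (by norm_num) (hexp ▸ neg_ne_zero.2 (by positivity)), hexp,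
      ← Real.rpow_mul (by norm_num)]
    congr 1; field_simp
  induction j with
  | zero => simp
  | succ j ih =>
    have hy0 := hy 0
    calc y (j + 1) ≤ (B * 4 ^ j * y j) ^ s := hstep j
      _ ≤ (B * 4 ^ j * (y 0 * κ ^ j)) ^ s := by
          have := hy j
          gcongr
      _ = (B * y 0) ^ s * ((4 * κ) ^ s) ^ j := by
          rw [Real.rpow_pow_comm (x := 4 * κ) (by positivity),
            ← Real.mul_rpow (by positivity) (by positivity)]
          congr 1; ring
      _ ≤ κ * y 0 * κ ^ j := by rw [hfix]; gcongr
      _ = y 0 * κ ^ (j + 1) := by ring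

/- The levels are `L (1 - 2⁻ʲ)`, so that consecutive ones differ by `L 2⁻ʲ⁻¹`. -/
lemma lt_of_levelStep (hs : 1 < s) (hA : 0 < A) (hL : 0 < L) (hV : ∀ t, 0 ≤ V t)
    (hanti : ∀ t η, 0 ≤ t → 0 ≤ η → V (t + η) ≤ V t)
    (hstep : ∀ t η, 0 ≤ t → 0 < η → (η ^ 2) ^ s * V (t + η) ≤ (A * V t) ^ s) (hVL : V L ≠ 0) :
    ((4 : ℝ) ^ (-(1 / (s - 1))) / (4 * A / L ^ 2)) ^ (s / (s - 1)) < V 0 := by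
  by_contra! hle
  have hB : 0 < 4 * A / L ^ 2 := by positivity
  have hlevel : ∀ j : ℕ, 0 ≤ L - L / 2 ^ j := fun j =>
    sub_nonneg.2 (div_le_self hL.le (one_le_pow₀ one_le_two))
  have hdecay := le_mul_pow_of_step (y := fun j => V (L - L / 2 ^ j)) hs hB.le (fun j => hV _)
    (fun j => ?_) (by simpa using mul_rpow_le_of_le_rpow hs hB (hV 0) hle)
  · have hκ : (4 : ℝ) ^ (-(s / (s - 1))) < 1 :=
      Real.rpow_lt_one_of_one_lt_of_neg (by norm_num)
        (neg_neg_of_pos (div_pos (by linarith) (by linarith)))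
    have hlim := (tendsto_pow_atTop_nhds_zero_of_lt_one (by positivity) hκ).const_mul (V 0)
    rw [mul_zero] at hlim
    refine hVL (le_antisymm (ge_of_tendsto' hlim fun j => ?_) (hV L))
    have hmono := hanti (L - L / 2 ^ j) (L / 2 ^ j) (hlevel j) (by positivity)
    rw [sub_add_cancel] at hmono
    simpa using hmono.trans (hdecay j)
  · have hη : 0 < L / 2 ^ (j + 1) := by positivity
    have hnext : L - L / 2 ^ j + L / 2 ^ (j + 1) = L - L / 2 ^ (j + 1) := by
      rw [pow_succ]; field_simp; ring
    have hfour : (4 : ℝ) ^ j = (2 ^ j) ^ 2 := by rw [← pow_mul, mul_comm, pow_mul]; norm_num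
    have hj := hstep _ _ (hlevel j) hη
    rw [hnext, ← le_div_iff₀' (by positivity),
      ← Real.div_rpow (mul_nonneg hA.le (hV _)) (by positivity)] at hj
    refine hj.trans_eq ?_
    rw [hfour, pow_succ]
    congr 1
    field_simp
    ring

end LevelIteration

section Paraboloid

variable {E : Type*} [NormedAddCommGroup E] {u : E → ℝ} {z : E} {k δ ρ : ℝ}

/-- The function `u - k` lowered by a paraboloid with vertex at `z`. On the ball of radius `ρ`
around `z` it is at most `2 δ` and, if `u ≤ k + 2 δ` there, negative near the boundary. -/
def paraboloidDrop (u : E → ℝ) (z : E) (k δ ρ : ℝ) (x : E) : ℝ :=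
  u x - k - 3 * δ / ρ ^ 2 * ‖x - z‖ ^ 2

lemma paraboloidDrop_le {x : E} (hδ : 0 ≤ δ) (hux : u x ≤ k + 2 * δ) :
    paraboloidDrop u z k δ ρ x ≤ 2 * δ := by
  have : 0 ≤ 3 * δ / ρ ^ 2 * ‖x - z‖ ^ 2 := by positivity
  unfold paraboloidDrop
  linarith

variable [InnerProductSpace ℝ E] [FiniteDimensional ℝ E]

lemma gradient_paraboloidDrop (hu : ContDiff ℝ 1 u) (z x : E) (k δ ρ : ℝ) :
    ∇ (paraboloidDrop u z k δ ρ) x = ∇ u x - (6 * δ / ρ ^ 2) • (x - z) := by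
  apply HasGradientAt.gradient
  rw [hasGradientAt_iff_hasFDerivAt]
  have hderiv := ((hu.differentiable one_ne_zero x).hasFDerivAt.sub_const k).sub
    (((hasFDerivAt_id (𝕜 := ℝ) x).sub_const z).norm_sq.const_mul (3 * δ / ρ ^ 2))
  refine hderiv.congr_fderiv ?_
  ext y
  simp [gradient]
  ring

lemma isTruncatable_paraboloidDrop (hu : ContDiff ℝ 1 u) (hδ : 0 ≤ δ)
    (hρ : 0 < ρ) (hub : ∀ x ∈ ball z ρ, u x ≤ k + 2 * δ) :
    IsTruncatable (ball z ρ) (paraboloidDrop u z k δ ρ) where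
  contDiff := by
    have : ContDiff ℝ 1 fun x : E => ‖x - z‖ ^ 2 := (contDiff_id.sub contDiff_const).norm_sq ℝ
    unfold paraboloidDrop
    fun_prop
  isOpen := isOpen_ball
  exists_isCompact := by
    refine ⟨closedBall z (5 / 6 * ρ), closedBall_subset_ball (by linarith),
      isCompact_closedBall _ _, fun x hxU hxK => ?_⟩
    rw [mem_closedBall, not_le, dist_eq_norm] at hxK
    have hquad : 3 * δ / ρ ^ 2 * (5 / 6 * ρ) ^ 2 ≤ 3 * δ / ρ ^ 2 * ‖x - z‖ ^ 2 := by gcongr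
    have hvalue : 3 * δ / ρ ^ 2 * (5 / 6 * ρ) ^ 2 = 75 / 36 * δ := by field_simp; ring
    unfold paraboloidDrop
    linarith [hub x hxU]

end Paraboloid

section Growth

variable {E : Type*} [NormedAddCommGroup E] [InnerProductSpace ℝ E] [FiniteDimensional ℝ E]
  [MeasurableSpace E] [BorelSpace E] {p C₁ C₂ α m d h L s : ℝ} {F : E → E} {a b u W : E → ℝ}
  {U : Set E}

lemma exists_superlevelVolume_step (hs : (Module.finrank ℝ E : ℝ).HolderConjugate s) :
    ∃ S : ℝ, 0 < S ∧ ∀ {p C₁ C₂ α m d h : ℝ} {F : E → E} {a b u W : E → ℝ} {U : Set E},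
      IsSubsolution p C₁ C₂ α F a b u → IsPerturbation p C₁ α a b u U W m d h → 0 ≤ h →
      ∀ t η, 0 ≤ t → 0 < η → (η ^ 2) ^ s * superlevelVolume U W (t + η)
        ≤ (S * (gradientConst p C₁ C₂ * d * m) * superlevelVolume U W t) ^ s := by
  obtain ⟨S, hS, hSobolev⟩ := exists_rpow_mul_measureReal_le hs
  refine ⟨S, hS, fun {p C₁ C₂ α m d h F a b u W U} D hW hh t η ht hη => ?_⟩
  have hW' := hW.sub_const ht
  have hT := hW'.truncatable
  have hcompact : HasCompactSupport fun x => posPartOn U (fun x => W x - t) x ^ 2 :=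
    hT.hasCompactSupport_posPartOn.comp_left (g := fun t : ℝ => t ^ 2) (by norm_num)
  have hG := gradientConst_pos (p := p) D.C₁_pos D.C₂_nonneg
  have hd := hW.d_pos
  have := hW.m_pos
  have hs0 := hs.symm.pos
  have : 0 ≤ ∫ x, ‖∇ (fun x => posPartOn U (fun x => W x - t) x ^ 2) x‖ :=
    integral_nonneg fun _ => norm_nonneg _
  have hvolume := hW'.integral_posPartOn_le
  rw [superlevelVolume_sub_const, add_zero] at hvolume
  rw [← superlevelVolume_sub_const]
  calc _ ≤ (η ^ 2) ^ s * volume.real {x | η ^ 2 ≤ |posPartOn U (fun x => W x - t) x ^ 2|} := by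
        gcongr; exact hT.superlevelVolume_le_posPartOn_sq hη
    _ ≤ (S * ∫ x, ‖∇ (fun x => posPartOn U (fun x => W x - t) x ^ 2) x‖) ^ s :=
        hSobolev _ hT.contDiff_posPartOn_sq hcompact _ (by positivity)
    _ ≤ (S * (gradientConst p C₁ C₂ * d * (m * superlevelVolume U W t))) ^ s := by
        gcongr
        exact (hW'.integral_norm_gradient_posPartOn_sq_le D hh).trans (by gcongr)
    _ = _ := by congr 1; ring

/- The exponent `s / (s - 1)` is the dimension. -/
lemma exists_rpow_le_superlevelVolume (hs : (Module.finrank ℝ E : ℝ).HolderConjugate s) :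
    ∃ c : ℝ, 0 < c ∧ ∀ {p C₁ C₂ α m d h L : ℝ} {F : E → E} {a b u W : E → ℝ} {U : Set E},
      IsSubsolution p C₁ C₂ α F a b u → IsPerturbation p C₁ α a b u U W m d h → 0 ≤ h →
      0 < L → superlevelVolume U W L ≠ 0 →
      (c * L ^ 2 / (gradientConst p C₁ C₂ * d * m)) ^ Module.finrank ℝ E
        ≤ superlevelVolume U W 0 := by
  obtain ⟨S, hS, hstep⟩ := exists_superlevelVolume_step hs
  refine ⟨(4 : ℝ) ^ (-(1 / (s - 1))) / (4 * S), by positivity,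
    fun {p C₁ C₂ α m d h L F a b u W U} D hW hh hL hVL => ?_⟩
  have hG := gradientConst_pos (p := p) D.C₁_pos D.C₂_nonneg
  have hd := hW.d_pos
  have hm := hW.m_pos
  have hlt := lt_of_levelStep (V := superlevelVolume U W) (A := S * (gradientConst p C₁ C₂ * d * m))
    hs.symm.lt (by positivity) hL (fun _ => superlevelVolume_nonneg)
    (fun t η ht hη => hW.truncatable.superlevelVolume_anti ht hη) (hstep D hW hh) hVL
  rw [← hs.symm.conjugate_eq, Real.rpow_natCast] at hlt
  refine le_of_eq_of_le ?_ hlt.le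
  congr 1
  field_simp

lemma isPerturbation_paraboloidDrop {z : E} {k δ ρ : ℝ} (D : IsSubsolution p C₁ C₂ α F a b u)
    (hδ : 0 < δ) (hρ : 0 < ρ) (hub : ∀ x ∈ ball z ρ, u x ≤ k + 2 * δ)
    (hb : ∀ᵐ x, x ∈ ball z ρ → b x * δ * (δ / ρ) ^ (α - p) ≤ C₁ / 4)
    (hh : ∀ᵐ x, x ∈ ball z ρ → k < u x → h ≤ a x) :
    IsPerturbation p C₁ α a b u (ball z ρ) (paraboloidDrop u z k δ ρ) (2 * δ) (6 * (δ / ρ)) h where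
  truncatable := isTruncatable_paraboloidDrop D.contDiff hδ.le hρ hub
  d_pos := by positivity
  m_pos := by positivity
  le_m x hx := paraboloidDrop_le hδ.le (hub x hx)
  norm_gradient_sub_le x hx := by
    rw [gradient_paraboloidDrop D.contDiff, sub_sub_cancel_left, norm_neg, norm_smul,
      Real.norm_of_nonneg (by positivity)]
    calc 6 * δ / ρ ^ 2 * ‖x - z‖ ≤ 6 * δ / ρ ^ 2 * ρ := by
          gcongr; exact (mem_ball_iff_norm.1 hx).le
      _ = 6 * (δ / ρ) := by field_simp
  absorb := by
    filter_upwards [hb] with x hx hxU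
    have hbx := D.b_nonneg x
    have hpow : (6 * (δ / ρ)) ^ (α - p) ≤ (δ / ρ) ^ (α - p) :=
      Real.rpow_le_rpow_of_nonpos (by positivity) (le_mul_of_one_le_left (by positivity)
        (by norm_num)) (by linarith [D.α_le_p])
    calc b x * (2 * δ) * (6 * (δ / ρ)) ^ (α - p) ≤ b x * (2 * δ) * (δ / ρ) ^ (α - p) := by gcongr
      _ ≤ C₁ / 2 := by linarith [hx hxU]
  le_source := by
    filter_upwards [hh] with x hx hxU hWx
    refine hx hxU ?_
    have : 0 ≤ 3 * δ / ρ ^ 2 * ‖x - z‖ ^ 2 := by positivity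
    unfold paraboloidDrop at hWx
    linarith

lemma IsTruncatable.superlevelVolume_ne_zero {z : E} {t : ℝ} (hT : IsTruncatable U W)
    (hz : z ∈ U) (ht : 0 ≤ t) (hWz : t < W z) : superlevelVolume U W t ≠ 0 :=
  (ENNReal.toReal_pos
    ((hT.isOpen.inter (isOpen_lt continuous_const hT.contDiff.continuous)).measure_pos volume
      ⟨z, hz, hWz⟩).ne' (hT.volume_superlevel_lt_top ht).ne).ne'

lemma superlevelVolume_ball_le {z : E} {ρ t : ℝ} (hρ : 0 < ρ) :
    superlevelVolume (ball z ρ) W t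
      ≤ ρ ^ Module.finrank ℝ E * volume.real (ball (0 : E) 1) := by
  refine (measureReal_mono (fun x hx => hx.1) measure_ball_lt_top.ne).trans_eq ?_
  rw [measureReal_def, Measure.addHaar_ball_of_pos volume z hρ, ENNReal.toReal_mul,
    ENNReal.toReal_ofReal (by positivity), measureReal_def]

lemma mul_rpow_le_of_energy_density {c e h δ ρ ω : ℝ} {n : ℕ} (hc : 0 < c) (hδ : 0 < δ)
    (hρ : 0 < ρ)
    (hle : h * (δ / 4) ^ 2 * (c * ρ) ^ n ≤ e * (6 * (δ / ρ)) ^ p * (2 * δ) * (ρ ^ n * ω)) :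
    h * ρ ^ p ≤ e * 32 * 6 ^ p * ω / c ^ n * δ ^ (p - 1) := by
  have hpow : δ ^ p = δ ^ (p - 1) * δ := by
    rw [← Real.rpow_add_one hδ.ne', sub_add_cancel]
  rw [mul_pow, Real.mul_rpow (by norm_num) (by positivity), Real.div_rpow hδ.le hρ.le, hpow]
    at hle
  rw [div_mul_eq_mul_div, le_div_iff₀ (by positivity)]
  have hfactor : 0 ≤ ρ ^ p / (δ ^ 2 / 16 * ρ ^ n) := by positivity
  refine le_of_eq_of_le ?_ ((mul_le_mul_of_nonneg_left hle hfactor).trans_eq ?_)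
  · field_simp
    norm_num
  · field_simp
    ring

/- The superlevel volume at height `δ / 4` is at least a multiple of `ρ ^ n` by the density
estimate, while the energy estimate bounds it by a multiple of `δ ^ (p - 1) / (h ρ ^ p) * ρ ^ n`. -/
lemma exists_mul_rpow_le_mul_rpow_sub_one (hs : (Module.finrank ℝ E : ℝ).HolderConjugate s)
    (hC₁ : 0 < C₁) (hC₂ : 0 ≤ C₂) :
    ∃ K : ℝ, 1 ≤ K ∧ ∀ {α h k δ ρ : ℝ} {F : E → E} {a b u : E → ℝ} {z : E},
      IsSubsolution p C₁ C₂ α F a b u → 0 ≤ h → 0 < δ → 0 < ρ →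
      (∀ x ∈ ball z ρ, u x ≤ k + 2 * δ) → u z = k + δ →
      (∀ᵐ x, x ∈ ball z ρ → b x * δ * (δ / ρ) ^ (α - p) ≤ C₁ / 4) →
      (∀ᵐ x, x ∈ ball z ρ → k < u x → h ≤ a x) → h * ρ ^ p ≤ K * δ ^ (p - 1) := by
  obtain ⟨c, hc, hdensity⟩ := exists_rpow_le_superlevelVolume hs
  set n := Module.finrank ℝ E
  have hE := energyConst_pos (p := p) hC₁ hC₂
  have hG := gradientConst_pos (p := p) hC₁ hC₂
  set c' := c / (48 * gradientConst p C₁ C₂) with hc'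
  set ω := volume.real (ball (0 : E) 1)
  refine ⟨1 + energyConst p C₁ C₂ * 32 * 6 ^ p * ω / c' ^ n,
    le_add_of_nonneg_right (by positivity),
    fun {α h k δ ρ F a b u z} D hh hδ hρ hub huz hb ha => ?_⟩
  have hW := isPerturbation_paraboloidDrop D hδ hρ hub hb ha
  set W := paraboloidDrop u z k δ ρ
  have hWz : W z = δ := by simp [W, paraboloidDrop, huz]
  have hW' := hW.sub_const (η := δ / 4) (by positivity)
  have hlower := hdensity D hW' hh (half_pos hδ) (hW'.truncatable.superlevelVolume_ne_zero
    (mem_ball_self hρ) (by positivity) (by rw [hWz]; linarith))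
  have hradius : c * (δ / 2) ^ 2 / (gradientConst p C₁ C₂ * (6 * (δ / ρ)) * (2 * δ)) = c' * ρ := by
    rw [hc']
    field_simp
    norm_num
  rw [superlevelVolume_sub_const, add_zero, hradius] at hlower
  have hbound := mul_rpow_le_of_energy_density (by positivity) hδ hρ <| calc
    h * (δ / 4) ^ 2 * (c' * ρ) ^ n ≤ h * (δ / 4) ^ 2 * superlevelVolume (ball z ρ) W (δ / 4) := by
        gcongr
    _ ≤ energyConst p C₁ C₂ * (6 * (δ / ρ)) ^ p * (2 * δ) * superlevelVolume (ball z ρ) W 0 :=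
        hW.mul_sq_mul_superlevelVolume_le D hh (by positivity)
    _ ≤ energyConst p C₁ C₂ * (6 * (δ / ρ)) ^ p * (2 * δ) * (ρ ^ n * ω) := by
        gcongr; exact superlevelVolume_ball_le hρ
  linarith [Real.rpow_nonneg hδ.le (p - 1)]

end Growth

section MaximumPrinciple

variable {E : Type*} [NormedAddCommGroup E] [InnerProductSpace ℝ E] [FiniteDimensional ℝ E]
  [MeasurableSpace E] [BorelSpace E]

lemma exists_one_le_mul_measure_rpow {s : ℝ} (hs : (Module.finrank ℝ E : ℝ).HolderConjugate s)
    (C : ℝ) :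
    ∃ K : ℝ, ∀ f : E → ℝ, ContDiff ℝ 1 f → HasCompactSupport f → f ≠ 0 → ∀ G : Set E,
      ∫ x, ‖∇ f x‖ ≤ C * ∫ x in G, ‖f x‖ → 1 ≤ ENNReal.ofReal K * volume G ^ (1 - 1 / s) := by
  obtain ⟨S, hS, hSobolev⟩ := exists_eLpNorm_le_integral_norm_gradient hs
  refine ⟨S * C, fun f hf hc hf0 G hG => ?_⟩
  have hs1 := hs.symm.lt
  have hfs : MemLp f (ENNReal.ofReal s) volume := hf.continuous.memLp_of_hasCompactSupport hc
  have hne : eLpNorm f (ENNReal.ofReal s) volume ≠ 0 := by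
    rw [Ne, eLpNorm_eq_zero_iff hfs.1 (ENNReal.ofReal_ne_zero_iff.2 hs.symm.pos)]
    exact fun h => hf0 ((Continuous.ae_eq_iff_eq volume hf.continuous continuous_zero).1 h)
  have hfint : Integrable f := hf.continuous.integrable_of_hasCompactSupport hc
  have hHolder : eLpNorm f 1 (volume.restrict G)
      ≤ eLpNorm f (ENNReal.ofReal s) volume * volume G ^ (1 - 1 / s) := by
    have h := eLpNorm_le_eLpNorm_mul_rpow_measure_univ (μ := volume.restrict G) (p := 1)
      (q := ENNReal.ofReal s) (ENNReal.one_le_ofReal.2 hs1.le) hfs.1.restrict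
    rw [ENNReal.toReal_one, ENNReal.toReal_ofReal hs.symm.nonneg, div_one,
      Measure.restrict_apply_univ] at h
    exact h.trans (by gcongr; exact Measure.restrict_le_self)
  rw [← ENNReal.mul_le_mul_iff_right hne hfs.eLpNorm_ne_top, mul_one]
  calc eLpNorm f (ENNReal.ofReal s) volume ≤ ENNReal.ofReal (S * ∫ x, ‖∇ f x‖) := hSobolev f hf hc
    _ ≤ ENNReal.ofReal (S * C * ∫ x in G, ‖f x‖) := by
        rw [mul_assoc]
        gcongr
    _ = ENNReal.ofReal (S * C) * eLpNorm f 1 (volume.restrict G) := by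
        rw [ENNReal.ofReal_mul' (integral_nonneg fun _ => norm_nonneg _),
          eLpNorm_one_eq_lintegral_enorm,
          ofReal_integral_norm_eq_lintegral_enorm hfint.integrableOn]
    _ ≤ ENNReal.ofReal (S * C) *
        (eLpNorm f (ENNReal.ofReal s) volume * volume G ^ (1 - 1 / s)) := by gcongr
    _ = eLpNorm f (ENNReal.ofReal s) volume *
        (ENNReal.ofReal (S * C) * volume G ^ (1 - 1 / s)) := by ring

lemma tendsto_measure_gradient_ne_zero_inter_superlevel {u : E → ℝ} {U : Set E} {m : ℝ}
    {κ : ℕ → ℝ} (hu : ContDiff ℝ 1 u) (hU : IsOpen U) (hUfin : volume U ≠ ⊤)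
    (hm : ∀ x ∈ U, u x ≤ m) (hκ : Monotone κ) (hlim : Tendsto κ atTop (𝓝 m)) :
    Tendsto (fun j => volume ({x | ∇ u x ≠ 0} ∩ (U ∩ {x | κ j < u x}))) atTop (𝓝 0) := by
  have hopen : ∀ j, IsOpen ({x | ∇ u x ≠ 0} ∩ (U ∩ {x | κ j < u x})) := fun j =>
    (isOpen_ne.preimage (continuous_gradient hu)).inter
      (hU.inter (isOpen_lt continuous_const hu.continuous))
  have hempty : ⋂ j, {x | ∇ u x ≠ 0} ∩ (U ∩ {x | κ j < u x}) = ∅ := by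
    refine eq_empty_iff_forall_notMem.2 fun x hx => ?_
    rw [mem_iInter] at hx
    have hmax : IsLocalMax u x := by
      filter_upwards [hU.mem_nhds (hx 0).2.1] with y hy
      exact (hm y hy).trans (le_of_tendsto' hlim fun j => (hx j).2.2.le)
    exact (hx 0).1 (by simp [gradient, hmax.fderiv_eq_zero])
  rw [← measure_empty (μ := (volume : Measure E)), ← hempty]
  refine tendsto_measure_iInter_atTop (fun j => (hopen j).measurableSet.nullMeasurableSet)
    (fun i j hij x hx => ⟨hx.1, hx.2.1, (hκ hij).trans_lt hx.2.2⟩)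
    ⟨0, ne_top_of_le_ne_top hUfin (measure_mono (inter_subset_right.trans inter_subset_left))⟩

variable {p C₁ C₂ α B κ k : ℝ} {F : E → E} {a b u : E → ℝ} {U : Set E}

lemma IsSubsolution.exists_mul_rpow_norm_gradient_le (D : IsSubsolution p C₁ C₂ α F a b u)
    {K : Set E} (hK : IsCompact K) :
    ∃ B, 0 ≤ B ∧ ∀ x ∈ K, b x * ‖∇ u x‖ ^ α ≤ B * ‖∇ u x‖ ^ (p - 1) := by
  obtain ⟨L, hL⟩ := hK.exists_bound_of_continuousOn (continuous_gradient D.contDiff).continuousOn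
  obtain ⟨B, hB⟩ := D.b_bddOn_compact K hK
  have hp := D.one_lt_p
  have hα := sub_nonneg.2 D.p_sub_one_le_α
  refine ⟨|B| * |L| ^ (α - (p - 1)), by positivity, fun x hx => ?_⟩
  calc b x * ‖∇ u x‖ ^ α = b x * ‖∇ u x‖ ^ (α - (p - 1)) * ‖∇ u x‖ ^ (p - 1) := by
        rw [mul_assoc, ← Real.rpow_add_of_nonneg (norm_nonneg _) hα (by linarith), sub_add_cancel]
    _ ≤ |B| * |L| ^ (α - (p - 1)) * ‖∇ u x‖ ^ (p - 1) := by
        gcongr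
        · exact (hB x hx).trans (le_abs_self B)
        · exact (hL x hx).trans (le_abs_self L)

lemma IsSubsolution.mul_rpow_sub_indicator_le (D : IsSubsolution p C₁ C₂ α F a b u) {x : E}
    {w : ℝ} (hw : 0 ≤ w) (hB : 0 ≤ B) (hb : b x * ‖∇ u x‖ ^ α ≤ B * ‖∇ u x‖ ^ (p - 1)) :
    C₁ * (‖∇ u x‖ ^ p * w)
        - C₁ * (B / C₁) ^ p * {x | ∇ u x ≠ 0}.indicator (fun _ => w ^ (p + 1)) x
      ≤ (a x - b x * ‖∇ u x‖ ^ α) * w ^ 2 + 2 * w * ⟪F x, ∇ u x⟫ := by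
  have hp := D.one_lt_p
  have ha := D.a_nonneg x
  by_cases hx : ∇ u x = 0
  · rw [indicator_of_notMem (by simpa using hx), hx, norm_zero, inner_zero_right,
      Real.zero_rpow (by linarith), Real.zero_rpow (by linarith [D.p_sub_one_le_α])]
    have : 0 ≤ a x * w ^ 2 := by positivity
    linarith
  · rw [indicator_of_mem (by simpa using hx), Real.rpow_add_one' hw (by linarith)]
    have hyoung := mul_le_mul_of_nonneg_right (mul_rpow_sub_one_mul_le hp.le hB D.C₁_pos
      (norm_nonneg (∇ u x)) hw) hw
    have hcoercive := mul_le_mul_of_nonneg_left (D.coercive x) (mul_nonneg zero_le_two hw)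
    have hdrift := mul_le_mul_of_nonneg_right hb (sq_nonneg w)
    rw [real_inner_comm] at hcoercive
    have : 0 ≤ a x * w ^ 2 := by positivity
    linarith

lemma IsSubsolution.integral_indicator_posPartOn_rpow_eq
    (D : IsSubsolution p C₁ C₂ α F a b u) :
    ∫ x, {x | ∇ u x ≠ 0}.indicator (fun x => posPartOn U (fun x => u x - κ) x ^ (p + 1)) x
      = ∫ x in {x | ∇ u x ≠ 0} ∩ (U ∩ {x | κ < u x}),
        ‖posPartOn U (fun x => u x - κ) x ^ (p + 1)‖ := by
  have hE : MeasurableSet {x | ∇ u x ≠ 0} :=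
    (isOpen_ne.preimage (continuous_gradient D.contDiff)).measurableSet
  simp_rw [Real.norm_of_nonneg (Real.rpow_nonneg (posPartOn_nonneg _ _ _) (p + 1))]
  rw [integral_indicator hE]
  refine setIntegral_eq_of_subset_of_forall_sdiff_eq_zero hE inter_subset_left fun x hx => ?_
  have hvanish : posPartOn U (fun x => u x - κ) x = 0 := by
    by_cases hxU : x ∈ U
    · rw [posPartOn_of_mem _ hxU, max_eq_right]
      by_contra! hlt
      exact hx.2 ⟨hx.1, hxU, sub_pos.1 hlt⟩
    · exact posPartOn_of_notMem _ hxU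
  rw [hvanish, Real.zero_rpow (by linarith [D.one_lt_p])]

section Energy

variable (D : IsSubsolution p C₁ C₂ α F a b u) (hW : IsTruncatable U fun x => u x - κ)
include D hW

lemma IsSubsolution.integrable_rpow_norm_gradient_mul_posPartOn :
    Integrable fun x => ‖∇ u x‖ ^ p * posPartOn U (fun x => u x - κ) x := by
  have hgrad : Continuous fun x => ‖∇ u x‖ ^ p :=
    (continuous_gradient D.contDiff).norm.rpow_const fun _ => .inr (by linarith [D.one_lt_p])
  simpa only [pow_one] using hW.integrable_mul_posPartOn_pow hgrad one_ne_zero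

lemma IsSubsolution.integrable_indicator_posPartOn_rpow :
    Integrable ({x | ∇ u x ≠ 0}.indicator fun x => posPartOn U (fun x => u x - κ) x ^ (p + 1)) :=
  have hp : 1 < p + 1 := by linarith [D.one_lt_p]
  ((hW.contDiff_posPartOn_rpow hp).continuous.integrable_of_hasCompactSupport
    (hW.hasCompactSupport_posPartOn_rpow (zero_lt_one.trans hp).ne')).indicator
    (isOpen_ne.preimage (continuous_gradient D.contDiff)).measurableSet

lemma IsSubsolution.mul_integral_rpow_mul_posPartOn_le (hB : 0 ≤ B)
    (hb : ∀ x ∈ U, b x * ‖∇ u x‖ ^ α ≤ B * ‖∇ u x‖ ^ (p - 1)) :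
    C₁ * ∫ x, ‖∇ u x‖ ^ p * posPartOn U (fun x => u x - κ) x
      ≤ C₁ * (B / C₁) ^ p *
        ∫ x, {x | ∇ u x ≠ 0}.indicator (fun x => posPartOn U (fun x => u x - κ) x ^ (p + 1)) x := by
  have hgrad := (D.integrable_rpow_norm_gradient_mul_posPartOn hW).const_mul C₁
  have hind := (D.integrable_indicator_posPartOn_rpow hW).const_mul (C₁ * (B / C₁) ^ p)
  have htested := D.integral_nonpos_of_le_tested hW (hgrad.sub hind) (.of_forall fun x => ?_)
  · rw [integral_sub' hgrad hind, integral_const_mul, integral_const_mul] at htested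
    linarith
  · rw [gradient_sub_const]
    by_cases hx : x ∈ U
    · exact D.mul_rpow_sub_indicator_le (posPartOn_nonneg _ _ x) hB (hb x hx)
    · have hp : p + 1 ≠ 0 := by linarith [D.one_lt_p]
      simp [indicator, posPartOn_of_notMem _ hx, Real.zero_rpow hp]

lemma IsSubsolution.norm_gradient_posPartOn_rpow_le (x : E) :
    ‖∇ (fun x => posPartOn U (fun x => u x - κ) x ^ (p + 1)) x‖ ≤ (p + 1) *
      ({x | ∇ u x ≠ 0}.indicator (fun x => posPartOn U (fun x => u x - κ) x ^ (p + 1)) x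
        + ‖∇ u x‖ ^ p * posPartOn U (fun x => u x - κ) x) := by
  have hp := D.one_lt_p
  have hv := posPartOn_nonneg U (fun x => u x - κ) x
  rw [hW.gradient_posPartOn_rpow (by linarith), gradient_sub_const, norm_smul,
    Real.norm_of_nonneg (by positivity), add_sub_cancel_right, mul_assoc]
  gcongr
  by_cases hx : ∇ u x = 0
  · rw [indicator_of_notMem (by simpa using hx), hx, norm_zero, mul_zero]
    positivity
  · rw [indicator_of_mem (by simpa using hx)]
    have hyoung := rpow_mul_rpow_le_add hv (norm_nonneg (∇ u x)) (sub_nonneg.2 hp.le) zero_le_one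
    rw [sub_add_cancel, Real.rpow_one] at hyoung
    rw [Real.rpow_add_one' hv (by linarith), ← add_mul]
    calc posPartOn U (fun x => u x - κ) x ^ p * ‖∇ u x‖
        = posPartOn U (fun x => u x - κ) x ^ (p - 1) * ‖∇ u x‖
          * posPartOn U (fun x => u x - κ) x := by
          rw [mul_right_comm, ← Real.rpow_add_one' hv (by linarith), sub_add_cancel]
      _ ≤ _ := by gcongr

lemma IsSubsolution.integral_norm_gradient_posPartOn_rpow_le (hB : 0 ≤ B)
    (hb : ∀ x ∈ U, b x * ‖∇ u x‖ ^ α ≤ B * ‖∇ u x‖ ^ (p - 1)) :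
    ∫ x, ‖∇ (fun x => posPartOn U (fun x => u x - κ) x ^ (p + 1)) x‖
      ≤ (p + 1) * (1 + (B / C₁) ^ p) *
        ∫ x, {x | ∇ u x ≠ 0}.indicator (fun x => posPartOn U (fun x => u x - κ) x ^ (p + 1)) x := by
  have hgrad := D.integrable_rpow_norm_gradient_mul_posPartOn hW
  have hind := D.integrable_indicator_posPartOn_rpow hW
  have henergy := D.mul_integral_rpow_mul_posPartOn_le hW hB hb
  rw [mul_assoc, mul_le_mul_iff_right₀ D.C₁_pos] at henergy
  have hp := D.one_lt_p
  calc _ ≤ ∫ x, (p + 1) *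
        ({x | ∇ u x ≠ 0}.indicator (fun x => posPartOn U (fun x => u x - κ) x ^ (p + 1)) x
        + ‖∇ u x‖ ^ p * posPartOn U (fun x => u x - κ) x) :=
        integral_mono_of_nonneg (.of_forall fun x => norm_nonneg _)
          ((hind.add hgrad).const_mul _) (.of_forall (D.norm_gradient_posPartOn_rpow_le hW))
    _ ≤ _ := by
        rw [integral_const_mul, integral_add hind hgrad, mul_assoc, one_add_mul]
        gcongr

end Energy

theorem IsSubsolution.le_of_forall_mem_frontier_le (D : IsSubsolution p C₁ C₂ α F a b u) {s : ℝ}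
    (hs : (Module.finrank ℝ E : ℝ).HolderConjugate s) (hU : IsOpen U)
    (hcompact : IsCompact (closure U)) (hk : ∀ z ∈ frontier U, u z ≤ k) :
    ∀ x ∈ U, u x ≤ k := by
  intro x hx
  by_contra! hkx
  obtain ⟨y, hy, hmax⟩ := hcompact.exists_isMaxOn ⟨x, subset_closure hx⟩
    D.contDiff.continuous.continuousOn
  have hmaxU : ∀ z ∈ U, u z ≤ u y := fun z hz => hmax (subset_closure hz)
  have hky : k < u y := hkx.trans_le (hmaxU x hx)
  have hyU : y ∈ U := by
    by_contra hyU
    exact hky.not_ge (hk y ⟨hy, by rwa [hU.interior_eq]⟩)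
  have hp := D.one_lt_p
  obtain ⟨κ, hκmono, hκ, hκlim⟩ := exists_seq_strictMono_tendsto' hky
  obtain ⟨B, hB, hb⟩ := D.exists_mul_rpow_norm_gradient_le hcompact
  obtain ⟨K, hK⟩ := exists_one_le_mul_measure_rpow hs ((p + 1) * (1 + (B / C₁) ^ p))
  have hvol : ∀ j, 1 ≤ ENNReal.ofReal K *
      volume ({x | ∇ u x ≠ 0} ∩ (U ∩ {x | κ j < u x})) ^ (1 - 1 / s) := by
    intro j
    have hW := isTruncatable_sub_const D.contDiff hU hcompact fun z hz =>
      (hk z hz).trans_lt (hκ j).1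
    refine hK _ (hW.contDiff_posPartOn_rpow (s := p + 1) (by linarith))
      (hW.hasCompactSupport_posPartOn_rpow (by linarith)) (fun h0 => ?_) _ ?_
    · have hvy := congrFun h0 y
      rw [posPartOn_of_mem _ hyU, max_eq_left (sub_nonneg.2 (hκ j).2.le)] at hvy
      exact (Real.rpow_pos_of_pos (sub_pos.2 (hκ j).2) _).ne' hvy
    · rw [← D.integral_indicator_posPartOn_rpow_eq]
      exact D.integral_norm_gradient_posPartOn_rpow_le hW hB fun x hx => hb x (subset_closure hx)
  have hUfin := (measure_mono subset_closure).trans_lt (hcompact.measure_lt_top (μ := volume))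
  have hexp : 0 < 1 - 1 / s := sub_pos.2 ((div_lt_one hs.symm.pos).2 hs.symm.lt)
  have htendsto := ENNReal.Tendsto.const_mul (a := ENNReal.ofReal K)
    ((ENNReal.continuous_rpow_const (y := 1 - 1 / s)).tendsto _ |>.comp
      (tendsto_measure_gradient_ne_zero_inter_superlevel D.contDiff hU hUfin.ne hmaxU
        hκmono.monotone hκlim)) (.inr ENNReal.ofReal_ne_top)
  rw [ENNReal.zero_rpow_of_pos hexp, mul_zero] at htendsto
  exact (ge_of_tendsto' htendsto hvol).not_gt one_pos

end MaximumPrinciple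

section StepSize

variable {p α β κ H K Q R c ρ δ : ℝ}

lemma exists_le_le_rpow_sub_one_eq {a m r : ℝ} (hp : 1 < p) (ha : 0 < a) (hm : 0 < m) (hr : 0 < r) :
    ∃ ρ δ : ℝ, (0 < ρ ∧ ρ ≤ r) ∧ (0 < δ ∧ δ ≤ m) ∧ δ ^ (p - 1) = a * ρ ^ p ∧
      (ρ = r ∨ δ = m) := by
  have hp1 : 0 < p - 1 := by linarith
  have hp0 : 0 < p := by linarith
  rcases le_total (a * r ^ p) (m ^ (p - 1)) with h | h
  · refine ⟨r, (a * r ^ p) ^ (p - 1)⁻¹, ⟨hr, le_rfl⟩, ⟨by positivity, ?_⟩,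
      Real.rpow_inv_rpow (by positivity) hp1.ne', .inl rfl⟩
    exact (Real.rpow_inv_le_iff_of_pos (by positivity) hm.le hp1).2 h
  · refine ⟨(m ^ (p - 1) / a) ^ p⁻¹, m, ⟨by positivity, ?_⟩, ⟨hm, le_rfl⟩, ?_, .inr rfl⟩
    · exact (Real.rpow_inv_le_iff_of_pos (by positivity) hr.le hp0).2 ((div_le_iff₀' ha).2 h)
    · rw [Real.rpow_inv_rpow (by positivity) hp0.ne', mul_div_cancel₀ _ ha.ne']

lemma rpow_mul_mul_div_rpow_le {h : ℝ} (hp : 1 < p) (hα : p - 1 ≤ α) (hβ : 0 ≤ β) (hh : 0 < h)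
    (hρ : 0 < ρ) (hδ : 0 < δ) (hδρ : δ ^ (p - 1) ≤ h * ρ ^ p) (hc : c ≤ 1)
    (hβρ : β * h ^ ((α - p + 1) / α) * ρ ≤ c) :
    β ^ (α / (p - 1)) * δ * (δ / ρ) ^ (α - p) ≤ c := by
  have hp1 : 0 < p - 1 := by linarith
  have hα0 : 0 < α := by linarith
  have hδ_le : δ ^ (α - p + 1) ≤ (h * ρ ^ p) ^ ((α - p + 1) / (p - 1)) := by
    calc δ ^ (α - p + 1) = (δ ^ (p - 1)) ^ ((α - p + 1) / (p - 1)) := by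
          rw [← Real.rpow_mul hδ.le, mul_div_cancel₀ _ hp1.ne']
      _ ≤ _ := Real.rpow_le_rpow (by positivity) hδρ (div_nonneg (by linarith) hp1.le)
  have hδ_div : δ * (δ / ρ) ^ (α - p) = δ ^ (α - p + 1) * ρ ^ (p - α) := by
    rw [Real.div_rpow hδ.le hρ.le, Real.rpow_add_one hδ.ne', show p - α = -(α - p) by ring,
      Real.rpow_neg hρ.le]
    field_simp
  have hexp : p * ((α - p + 1) / (p - 1)) + (p - α) = α / (p - 1) := by field_simp; ring
  calc β ^ (α / (p - 1)) * δ * (δ / ρ) ^ (α - p)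
      = β ^ (α / (p - 1)) * (δ ^ (α - p + 1) * ρ ^ (p - α)) := by rw [← hδ_div]; ring
    _ ≤ β ^ (α / (p - 1)) * ((h * ρ ^ p) ^ ((α - p + 1) / (p - 1)) * ρ ^ (p - α)) := by gcongr
    _ = (β * h ^ ((α - p + 1) / α) * ρ) ^ (α / (p - 1)) := by
        rw [Real.mul_rpow hh.le (by positivity), ← Real.rpow_mul hρ.le, mul_assoc (h ^ _),
          ← Real.rpow_add hρ, hexp, Real.mul_rpow (by positivity) hρ.le,
          Real.mul_rpow hβ (by positivity), ← Real.rpow_mul hh.le]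
        field_simp
    _ ≤ β * h ^ ((α - p + 1) / α) * ρ :=
        Real.rpow_le_self_of_le_one (by positivity) (hβρ.trans hc)
          ((one_le_div hp1).2 (by linarith))
    _ ≤ c := hβρ

/- For `H ≤ 1` the quotient is at least `H`, for `H ≥ 1` at least `H ^ ((p - 1) / α)`. -/
lemma rpow_sub_le_rpow_div_mul_rpow_neg {x : ℝ} (hp : 1 < p) (hα : p - 1 ≤ α) (hκ : 0 < κ)
    (hκ1 : κ ≤ 1) (hH : κ ≤ H) (hx : 0 ≤ x) :
    κ ^ (1 / (p - 1) - 1 / α) ≤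
      (H * (1 + x) / (1 + x * H ^ ((α - p + 1) / α))) ^ (1 / (p - 1)) * H ^ (-(1 / α)) := by
  have hp1 : 0 < p - 1 := by linarith
  have hα0 : 0 < α := by linarith
  have hH0 : 0 < H := by linarith
  have hγ : 0 ≤ (α - p + 1) / α := div_nonneg (by linarith) hα0.le
  have hexp : 0 ≤ 1 / (p - 1) - 1 / α := sub_nonneg.2 (one_div_le_one_div_of_le hp1 hα)
  rcases le_total H 1 with hH1 | hH1
  · have hquot : H ≤ H * (1 + x) / (1 + x * H ^ ((α - p + 1) / α)) := by
      rw [le_div_iff₀ (by positivity)]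
      gcongr
      exact mul_le_of_le_one_right hx (Real.rpow_le_one hH0.le hH1 hγ)
    calc κ ^ (1 / (p - 1) - 1 / α) ≤ H ^ (1 / (p - 1) - 1 / α) :=
          Real.rpow_le_rpow hκ.le hH hexp
      _ = H ^ (1 / (p - 1)) * H ^ (-(1 / α)) := by rw [← Real.rpow_add hH0, sub_eq_add_neg]
      _ ≤ _ := by gcongr
  · have hquot : H ^ ((p - 1) / α) ≤ H * (1 + x) / (1 + x * H ^ ((α - p + 1) / α)) := by
      rw [le_div_iff₀ (by positivity)]
      calc H ^ ((p - 1) / α) * (1 + x * H ^ ((α - p + 1) / α))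
          ≤ H ^ ((p - 1) / α) * (H ^ ((α - p + 1) / α) + x * H ^ ((α - p + 1) / α)) := by
            gcongr
            exact Real.one_le_rpow hH1 hγ
        _ = H ^ ((p - 1) / α + (α - p + 1) / α) * (1 + x) := by rw [Real.rpow_add hH0]; ring
        _ = H * (1 + x) := by rw [← add_div, show p - 1 + (α - p + 1) = α by ring,
            div_self hα0.ne', Real.rpow_one]
    calc κ ^ (1 / (p - 1) - 1 / α) ≤ 1 := Real.rpow_le_one hκ.le hκ1 hexp
      _ = (H ^ ((p - 1) / α)) ^ (1 / (p - 1)) * H ^ (-(1 / α)) := by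
          rw [← Real.rpow_mul hH0.le, ← Real.rpow_add hH0,
            show (p - 1) / α * (1 / (p - 1)) + -(1 / α) = 0 by field_simp; ring, Real.rpow_zero]
      _ ≤ _ := by gcongr

lemma mul_rpow_le_mul_rpow_neg_of_eq_div (hp : 1 < p) (hα : p - 1 ≤ α) (hβ : 0 ≤ β) (hQ : 0 < Q)
    (hR : 0 < R) (hκ : 0 < κ) (hκ1 : κ ≤ 1) (hH : κ ≤ H) (hK : 0 < K) (hc : 0 < c) (hδ : 0 < δ)
    (hρ : ρ = c * R / (1 + R * Q ^ ((α - p + 1) / α) * β * H ^ ((α - p + 1) / α)))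
    (hδρ : δ ^ (p - 1) = Q * H / (2 * K) * ρ ^ p) :
    (c / (2 * K)) ^ (1 / (p - 1)) * κ ^ (1 / (p - 1) - 1 / α) * (ρ / R) *
      (R * (R * (Q / (1 + R * Q ^ ((α - p + 1) / α) * β))) ^ (1 / (p - 1))) ≤
      δ * H ^ (-(1 / α)) := by
  have hp1 : 0 < p - 1 := by linarith
  have hH0 : 0 < H := by linarith
  set x := R * Q ^ ((α - p + 1) / α) * β
  have hx0 : 0 ≤ x := by positivity
  set y := H * (1 + x) / (1 + x * H ^ ((α - p + 1) / α)) with hy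
  have hρ0 : 0 < ρ := by rw [hρ]; positivity
  have hδ_eq : δ = ρ * ((c / (2 * K)) ^ (1 / (p - 1)) * (R * (Q / (1 + x))) ^ (1 / (p - 1)) *
      y ^ (1 / (p - 1))) := by
    have hpow : δ ^ (p - 1) = ρ ^ (p - 1) * (c / (2 * K) * (R * (Q / (1 + x))) * y) := by
      calc δ ^ (p - 1) = ρ ^ (p - 1) * (Q * H / (2 * K) * ρ) := by
            rw [hδρ, show p = p - 1 + 1 by ring, Real.rpow_add_one hρ0.ne']; ring_nf
        _ = _ := by
            congr 1
            rw [hρ, hy]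
            field_simp
    rw [← Real.mul_rpow (by positivity) (by positivity),
      ← Real.mul_rpow (by positivity) (by positivity)]
    nth_rw 1 [← Real.rpow_rpow_inv hδ.le hp1.ne', hpow, Real.mul_rpow (by positivity)
      (by positivity), Real.rpow_rpow_inv hρ0.le hp1.ne', one_div]
  calc _ = ρ * ((c / (2 * K)) ^ (1 / (p - 1)) * (R * (Q / (1 + x))) ^ (1 / (p - 1)) *
        κ ^ (1 / (p - 1) - 1 / α)) := by field_simp
    _ ≤ ρ * ((c / (2 * K)) ^ (1 / (p - 1)) * (R * (Q / (1 + x))) ^ (1 / (p - 1)) *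
        (y ^ (1 / (p - 1)) * H ^ (-(1 / α)))) := by
        gcongr
        exact rpow_sub_le_rpow_div_mul_rpow_neg hp hα hκ hκ1 hH hx0
    _ = δ * H ^ (-(1 / α)) := by rw [hδ_eq]; ring

lemma min_mul_mul_rpow_le_mul_rpow (hp : 1 < p) (hQ : 0 ≤ Q) (hR : 0 < R) :
    min (R * (R * Q) ^ (1 / (p - 1))) 1 ≤ R * Q ^ (1 / p) := by
  have hp1 : 0 < p - 1 := by linarith
  rcases le_total 1 (R * Q ^ (1 / p)) with h | h
  · exact (min_le_right _ _).trans h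
  · refine (min_le_left _ _).trans ?_
    calc R * (R * Q) ^ (1 / (p - 1)) = (R * Q ^ (1 / p)) ^ (p / (p - 1)) := by
          rw [Real.mul_rpow hR.le hQ, Real.mul_rpow hR.le (by positivity), ← Real.rpow_mul hQ,
            ← mul_assoc, ← Real.rpow_one_add' hR.le (by positivity)]
          congr 2 <;> field_simp
          ring
      _ ≤ R * Q ^ (1 / p) := Real.rpow_le_self_of_le_one (by positivity) h
          ((one_le_div hp1).2 (by linarith))

lemma mul_rpow_neg_eq_of_rpow_sub_one_eq {τ M : ℝ} (hp : 1 < p) (hQ : 0 < Q) (hH : 0 < H)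
    (hK : 0 < K) (hM : 0 < M) (hτ : 0 < τ) (hρ : 0 < ρ)
    (hδρ : (τ * M) ^ (p - 1) = Q * H / (2 * K) * ρ ^ p) :
    τ * M * (H * (2 * M)) ^ (-(1 / p)) = (τ / (4 * K)) ^ (1 / p) * ρ * Q ^ (1 / p) := by
  have hp0 : p ≠ 0 := by linarith
  have hpow : (τ * M) ^ p = τ / (4 * K) * Q * ρ ^ p * (H * (2 * M)) := by
    rw [show p = p - 1 + 1 by ring, Real.rpow_add_one (by positivity), hδρ, sub_add_cancel]
    field_simp
    ring
  rw [Real.rpow_neg (by positivity), ← div_eq_mul_inv, div_eq_iff (by positivity)]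
  calc τ * M = ((τ * M) ^ p) ^ (1 / p) := by
        rw [one_div, Real.rpow_rpow_inv (by positivity) hp0]
    _ = _ := by
        rw [hpow, Real.mul_rpow (by positivity) (by positivity), Real.mul_rpow (by positivity)
          (by positivity), Real.mul_rpow (by positivity) hQ.le, one_div,
          Real.rpow_rpow_inv hρ.le hp0]
        ring

lemma min_mul_le_mul_rpow_neg_of_rpow_sub_one_eq {τ M Y : ℝ} (hp : 1 < p) (hQ : 0 < Q)
    (hR : 0 < R) (hH : 0 < H) (hK : 0 < K) (hM : 0 < M) (hτ : 0 < τ) (hY : 1 ≤ Y) (hρ : 0 < ρ)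
    (hδρ : (τ * M) ^ (p - 1) = Q * H / (2 * K) * ρ ^ p) :
    (τ / (4 * K)) ^ (1 / p) * (ρ / R) * min (R * (R * (Q / Y)) ^ (1 / (p - 1))) 1 ≤
      τ * M * (H * (2 * M)) ^ (-(1 / p)) := by
  have : 0 < 1 / (p - 1) := one_div_pos.2 (by linarith)
  calc _ ≤ (τ / (4 * K)) ^ (1 / p) * (ρ / R) * min (R * (R * Q) ^ (1 / (p - 1))) 1 := by
        gcongr
        exact div_le_self hQ.le hY
    _ ≤ (τ / (4 * K)) ^ (1 / p) * (ρ / R) * (R * Q ^ (1 / p)) := by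
        gcongr
        exact min_mul_mul_rpow_le_mul_rpow hp hQ.le hR
    _ = (τ / (4 * K)) ^ (1 / p) * ρ * Q ^ (1 / p) := by field_simp
    _ = _ := (mul_rpow_neg_eq_of_rpow_sub_one_eq hp hQ hH hK hM hτ hρ hδρ).symm

lemma mul_le_of_le_div_one_add {y r : ℝ} (hy : 0 ≤ y) (hR : 0 < R) (hc : 0 ≤ c)
    (hr : r ≤ c * R / (1 + R * y)) : r ≤ c * R ∧ y * r ≤ c := by
  refine ⟨hr.trans (div_le_self (by positivity) (by linarith [mul_nonneg hR.le hy])), ?_⟩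
  calc y * r ≤ y * (c * R / (1 + R * y)) := by gcongr
    _ = c * (R * y / (1 + R * y)) := by ring
    _ ≤ c := mul_le_of_le_one_right hc ((div_le_one (by positivity)).2 (by linarith))

lemma exists_radius_increment {C₁ τ ω : ℝ} (hp : 1 < p) (hα : p - 1 ≤ α) (hC₁ : 0 < C₁)
    (hK : 1 ≤ K) (hτ : 0 < τ) (hκ : 0 < κ) (hκ1 : κ ≤ 1) (hω : 0 < ω) :
    ∃ c : ℝ, 0 < c ∧ ∀ R Q β M H : ℝ, 0 < R → 0 < Q → 0 ≤ β → 0 < M → κ ≤ H →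
      ∃ ρ δ : ℝ, 0 < ρ ∧ ρ ≤ ω * R ∧ 0 < δ ∧ δ ≤ τ * M ∧
        β ^ (α / (p - 1)) * δ * (δ / ρ) ^ (α - p) ≤ C₁ / 4 ∧
        K * δ ^ (p - 1) < Q * H * ρ ^ p ∧
        c * (ρ / R) * min (R * (R * (Q / (1 + R * Q ^ ((α - p + 1) / α) * β))) ^ (1 / (p - 1))) 1 ≤
          δ * ((H * (2 * M)) ^ (-(1 / p)) + H ^ (-(1 / α))) := by
  set c₀ := min (min ω (C₁ / 4)) 1
  have hc₀_pos : 0 < c₀ := lt_min (lt_min hω (by positivity)) one_pos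
  have hc₀ω : c₀ ≤ ω := (min_le_left _ _).trans (min_le_left _ _)
  have hc₀C : c₀ ≤ C₁ / 4 := (min_le_left _ _).trans (min_le_right _ _)
  refine ⟨min ((c₀ / (2 * K)) ^ (1 / (p - 1)) * κ ^ (1 / (p - 1) - 1 / α))
    ((τ / (4 * K)) ^ (1 / p)), lt_min (by positivity) (by positivity), ?_⟩
  intro R Q β M H hR hQ hβ hM hκH
  have hH : 0 < H := by linarith
  obtain ⟨ρ, δ, ⟨hρ, hρ_le⟩, ⟨hδ, hδ_le⟩, hδρ, hcase⟩ := exists_le_le_rpow_sub_one_eq hp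
    (a := Q * H / (2 * K)) (m := τ * M)
    (r := c₀ * R / (1 + R * Q ^ ((α - p + 1) / α) * β * H ^ ((α - p + 1) / α)))
    (by positivity) (by positivity) (by positivity)
  obtain ⟨hρR, hβρ⟩ := mul_le_of_le_div_one_add (r := ρ) (c := c₀)
    (y := β * (Q * H) ^ ((α - p + 1) / α)) (by positivity) hR hc₀_pos.le
    (hρ_le.trans_eq (by rw [Real.mul_rpow hQ.le hH.le]; ring_nf))
  have hδρ_half : K * δ ^ (p - 1) = Q * H * ρ ^ p / 2 := by rw [hδρ]; field_simp
  have hpos : 0 < Q * H * ρ ^ p := by positivity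
  refine ⟨ρ, δ, hρ, hρR.trans (by gcongr), hδ, hδ_le, ?_, by linarith, ?_⟩
  · refine (rpow_mul_mul_div_rpow_le hp hα hβ (by positivity) hρ hδ ?_ (min_le_right _ _)
      hβρ).trans hc₀C
    nlinarith [Real.rpow_pos_of_pos hδ (p - 1)]
  · have hH_p : 0 ≤ (H * (2 * M)) ^ (-(1 / p)) := by positivity
    have hH_α : 0 ≤ H ^ (-(1 / α)) := by positivity
    rcases hcase with hρ_eq | rfl
    · refine le_trans ?_ ((mul_rpow_le_mul_rpow_neg_of_eq_div hp hα hβ hQ hR hκ hκ1 hκH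
        (by positivity) hc₀_pos hδ hρ_eq hδρ).trans (by gcongr; linarith))
      gcongr <;> exact min_le_left _ _
    · refine le_trans ?_ ((min_mul_le_mul_rpow_neg_of_rpow_sub_one_eq
        (Y := 1 + R * Q ^ ((α - p + 1) / α) * β) hp hQ hR hH (by positivity) hM hτ
        (le_add_of_nonneg_right (by positivity)) hρ hδρ).trans (by gcongr; linarith))
      gcongr
      exact min_le_right _ _

end StepSize

section BoundedPrimitive

variable {p α θ m : ℝ} {g : ℝ → ℝ}

lemma exists_monotone_le_add_mul_le {w : ℝ → ℝ}
    (hw : ∫⁻ t in Ioi m, ENNReal.ofReal (w t) < ⊤) :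
    ∃ (G : ℝ → ℝ) (I : ℝ), Monotone G ∧ (∀ t, G t ∈ Icc 0 I) ∧
      ∀ M δ c, m ≤ M → 0 ≤ δ → 0 ≤ c → (∀ s ∈ Ioc M (M + δ), c ≤ w s) →
        G M + δ * c ≤ G (M + δ) := by
  have hle (t) : ∫⁻ s in Ioc m t, ENNReal.ofReal (w s) ≤ ∫⁻ s in Ioi m, ENNReal.ofReal (w s) :=
    lintegral_mono_set Ioc_subset_Ioi_self
  have hne (t) : ∫⁻ s in Ioc m t, ENNReal.ofReal (w s) ≠ ⊤ := ((hle t).trans_lt hw).ne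
  refine ⟨fun t => (∫⁻ s in Ioc m t, ENNReal.ofReal (w s)).toReal,
    (∫⁻ t in Ioi m, ENNReal.ofReal (w t)).toReal,
    fun s t hst => ENNReal.toReal_mono (hne t) (lintegral_mono_set (Ioc_subset_Ioc_right hst)),
    fun t => ⟨ENNReal.toReal_nonneg, ENNReal.toReal_mono hw.ne (hle t)⟩, ?_⟩
  intro M δ c hM hδ hc hcw
  have hincr : ENNReal.ofReal (δ * c) ≤ ∫⁻ s in Ioc M (M + δ), ENNReal.ofReal (w s) := by
    calc ENNReal.ofReal (δ * c) = ∫⁻ _ in Ioc M (M + δ), ENNReal.ofReal c := by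
          rw [setLIntegral_const, Real.volume_Ioc, ← ENNReal.ofReal_mul hc, add_sub_cancel_left,
            mul_comm]
      _ ≤ _ := setLIntegral_mono' measurableSet_Ioc
          fun s hs => ENNReal.ofReal_le_ofReal (hcw s hs)
  rw [← ENNReal.toReal_ofReal (mul_nonneg hδ hc),
    ← ENNReal.toReal_add (hne M) ENNReal.ofReal_ne_top]
  refine ENNReal.toReal_mono (hne _) ?_
  rw [← Ioc_union_Ioc_eq_Ioc hM (le_add_of_nonneg_right hδ),
    lintegral_union measurableSet_Ioc (Ioc_disjoint_Ioc_of_le le_rfl)]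
  gcongr

lemma setLIntegral_Ioi_ofReal_lt_top_of_le {w : ℝ → ℝ} {C d : ℝ}
    (hw : ∫⁻ t in Ioi d, ENNReal.ofReal (w t) < ⊤) (hC : ∀ t ∈ Ioc m d, w t ≤ C) :
    ∫⁻ t in Ioi m, ENNReal.ofReal (w t) < ⊤ := by
  refine (lintegral_mono_set Ioi_subset_Ioc_union_Ioi).trans_lt
    ((lintegral_union_le _ _ _).trans_lt (ENNReal.add_lt_top.2 ⟨?_, hw⟩))
  calc ∫⁻ t in Ioc m d, ENNReal.ofReal (w t) ≤ ∫⁻ _ in Ioc m d, ENNReal.ofReal C :=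
        setLIntegral_mono' measurableSet_Ioc fun t ht => ENNReal.ofReal_le_ofReal (hC t ht)
    _ < ⊤ := by
        rw [setLIntegral_const, Real.volume_Ioc]
        exact ENNReal.mul_lt_top ENNReal.ofReal_lt_top ENNReal.ofReal_lt_top

lemma exists_monotone_le_add_mul_rpow_neg_le {φ : ℝ → ℝ} {e κ d : ℝ} (he : 0 ≤ e) (hκ : 0 < κ)
    (hφ : ∫⁻ t in Ioi d, ENNReal.ofReal (φ t ^ (-e)) < ⊤) (hκφ : ∀ t ∈ Ioc m d, κ ≤ φ t) :
    ∃ (G : ℝ → ℝ) (I : ℝ), Monotone G ∧ (∀ t, G t ∈ Icc 0 I) ∧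
      ∀ M δ c, m ≤ M → 0 ≤ δ → 0 ≤ c → (∀ s ∈ Ioc M (M + δ), 0 < φ s ∧ φ s ≤ c) →
        G M + δ * c ^ (-e) ≤ G (M + δ) := by
  have hanti {x y : ℝ} (hx : 0 < x) (hxy : x ≤ y) : y ^ (-e) ≤ x ^ (-e) :=
    Real.rpow_le_rpow_of_nonpos hx hxy (neg_nonpos.2 he)
  obtain ⟨G, I, hmono, hI, hG⟩ := exists_monotone_le_add_mul_le
    (setLIntegral_Ioi_ofReal_lt_top_of_le hφ fun t ht => hanti hκ (hκφ t ht))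
  exact ⟨G, I, hmono, hI, fun M δ c hM hδ hc hφc => hG M δ _ hM hδ (Real.rpow_nonneg hc _)
    fun s hs => hanti (hφc s hs).1 (hφc s hs).2⟩

lemma exists_pos_le_ginf (hg : ContinuousOn g (Ioi 0)) (hgpos : ∀ t, 0 < t → 0 < g t)
    (hθ : 1 < θ) {m₁ m₂ : ℝ} (hm₁ : 0 < m₁) (hm : m₁ ≤ m₂) :
    ∃ κ, 0 < κ ∧ ∀ t ∈ Icc m₁ m₂, κ ≤ ginf g θ t := by
  have : 0 < θ := by linarith
  have hdiv : 0 < m₁ / θ := by positivity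
  obtain ⟨s₀, hs₀, hmin⟩ := isCompact_Icc.exists_isMinOn (s := Icc (m₁ / θ) (θ * m₂))
    ⟨m₁, div_le_self hm₁.le hθ.le, by nlinarith⟩ (hg.mono fun s hs => hdiv.trans_le hs.1)
  refine ⟨g s₀, hgpos _ (hdiv.trans_le hs₀.1), fun t ht => ?_⟩
  have ht0 : 0 < t := hm₁.trans_le ht.1
  refine le_csInf ⟨g t, mem_image_of_mem _ ⟨div_lt_self ht0 hθ, by nlinarith⟩⟩ ?_
  rintro _ ⟨s, hs, rfl⟩
  refine hmin ⟨le_trans ?_ hs.1.le, hs.2.le.trans ?_⟩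
  · gcongr; exact ht.1
  · gcongr; exact ht.2

lemma ginf_le_of_mem_Ioo (hgpos : ∀ t, 0 < t → 0 < g t) (hθ : 0 < θ) {s t : ℝ} (ht : 0 < t)
    (hs : s ∈ Ioo (t / θ) (θ * t)) : ginf g θ t ≤ g s := by
  refine csInf_le ⟨0, ?_⟩ (mem_image_of_mem _ hs)
  rintro _ ⟨s, hs, rfl⟩
  exact (hgpos s ((div_pos ht hθ).trans hs.1)).le

lemma exists_forall_mem_Icc_mem_Ioo (hθ : 1 < θ) :
    ∃ τ ∈ Ioo (0 : ℝ) 1, ∀ M s t, 0 < M → t ∈ Icc M ((1 + τ) * M) →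
      s ∈ Icc ((1 - τ) * M) ((1 + τ) * M) → s ∈ Ioo (t / θ) (θ * t) := by
  have hθ0 : 0 < θ := by linarith
  obtain ⟨τ, hτ⟩ : ∃ τ, τ * (2 * (θ + 1)) = θ - 1 := ⟨(θ - 1) / (2 * (θ + 1)), by field_simp⟩
  have hτ0 : 0 < τ := by nlinarith
  refine ⟨τ, ⟨hτ0, by nlinarith⟩, fun M s t hM ht hs => ⟨?_, ?_⟩⟩
  · rw [div_lt_iff₀ hθ0]
    calc t ≤ (1 + τ) * M := ht.2
      _ < (1 - τ) * θ * M := by gcongr; nlinarith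
      _ = (1 - τ) * M * θ := by ring
      _ ≤ s * θ := by gcongr; exact hs.1
  · calc s ≤ (1 + τ) * M := hs.2
      _ < θ * M := by gcongr; nlinarith
      _ ≤ θ * t := by gcongr; exact ht.1

lemma rpow_div_le_of_mul_rpow_neg_le {x H I : ℝ} (hα : 0 < α) (hx : 0 ≤ x) (hH : 0 < H)
    (h : x * H ^ (-(1 / α)) ≤ I) : (x / (I + 1)) ^ α ≤ H := by
  have hI : 0 ≤ I := le_trans (by positivity) h
  rw [← Real.le_rpow_inv_iff_of_pos (by positivity) hH.le hα, div_le_iff₀ (by positivity),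
    ← div_le_iff₀' (by positivity), div_eq_mul_inv, ← Real.rpow_neg hH.le, ← one_div]
  linarith

lemma exists_primitive_of_setLIntegral_ginf_lt_top (hg : ContinuousOn g (Ioi 0))
    (hgpos : ∀ t, 0 < t → 0 < g t) (hθ : 1 < θ) (hp : 0 < p) (hα : 0 < α)
    (hgp : ∫⁻ t in Ioi (1 : ℝ), ENNReal.ofReal ((ginf g θ t * t) ^ (-(1 / p))) < ⊤)
    (hgα : ∫⁻ t in Ioi (1 : ℝ), ENNReal.ofReal (ginf g θ t ^ (-(1 / α))) < ⊤) (hm : 0 < m) :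
    ∃ (τ : ℝ) (G : ℝ → ℝ) (I : ℝ), τ ∈ Ioo 0 1 ∧ Monotone G ∧ (∀ t, G t ∈ Icc 0 I) ∧
      ∀ M s δ, m ≤ M → s ∈ Icc ((1 - τ) * M) ((1 + τ) * M) → 0 ≤ δ → δ ≤ τ * M →
        G M + δ * ((g s * (2 * M)) ^ (-(1 / p)) + g s ^ (-(1 / α))) ≤ G (M + δ) := by
  obtain ⟨κ, hκ, hκ_le⟩ := exists_pos_le_ginf hg hgpos hθ hm (le_max_left m 1)
  have hκ_le' : ∀ t ∈ Ioc m 1, κ ≤ ginf g θ t := fun t ht =>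
    hκ_le t ⟨ht.1.le, ht.2.trans (le_max_right _ _)⟩
  obtain ⟨G₁, I₁, hG₁, hI₁, hstep₁⟩ := exists_monotone_le_add_mul_rpow_neg_le
    (by positivity) (mul_pos hκ hm) hgp fun t ht => mul_le_mul (hκ_le' t ht) ht.1.le hm.le
      (hκ.le.trans (hκ_le' t ht))
  obtain ⟨G₂, I₂, hG₂, hI₂, hstep₂⟩ := exists_monotone_le_add_mul_rpow_neg_le
    (by positivity) hκ hgα hκ_le'
  obtain ⟨τ, hτ, hwindow⟩ := exists_forall_mem_Icc_mem_Ioo hθ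
  refine ⟨τ, G₁ + G₂, I₁ + I₂, hτ, hG₁.add hG₂, fun t =>
    ⟨add_nonneg (hI₁ t).1 (hI₂ t).1, add_le_add (hI₁ t).2 (hI₂ t).2⟩, ?_⟩
  intro M s δ hM hs hδ hδM
  have hM0 : 0 < M := hm.trans_le hM
  have hgs : 0 < g s := hgpos s ((mul_pos (by linarith [hτ.2]) hM0).trans_le hs.1)
  have hginf : ∀ t ∈ Ioc M (M + δ), 0 < ginf g θ t ∧ ginf g θ t ≤ g s ∧ 0 < t ∧ t ≤ 2 * M := by
    intro t ht
    have ht0 : 0 < t := hM0.trans ht.1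
    obtain ⟨κ', hκ', hκ'_le⟩ := exists_pos_le_ginf hg hgpos hθ ht0 le_rfl
    refine ⟨hκ'.trans_le (hκ'_le t ⟨le_rfl, le_rfl⟩), ginf_le_of_mem_Ioo hgpos (by linarith) ht0
      (hwindow M s t hM0 ⟨ht.1.le, by linarith [ht.2]⟩ hs), ht0, ?_⟩
    nlinarith [ht.2, hτ.2]
  have h₁ := hstep₁ M δ (g s * (2 * M)) hM hδ (by positivity) fun t ht => by
    obtain ⟨hpos, hle, ht0, ht_le⟩ := hginf t ht
    exact ⟨mul_pos hpos ht0, mul_le_mul hle ht_le ht0.le hgs.le⟩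
  have h₂ := hstep₂ M δ (g s) hM hδ hgs.le fun t ht => ⟨(hginf t ht).1, (hginf t ht).2.1⟩
  simp only [Pi.add_apply]
  linarith

lemma exists_primitive_add_mul_le (hg : ContinuousOn g (Ioi 0)) (hgpos : ∀ t, 0 < t → 0 < g t)
    (hθ : 1 < θ) (hp : 0 < p) (hα : 0 < α)
    (hgp : ∫⁻ t in Ioi (1 : ℝ), ENNReal.ofReal ((ginf g θ t * t) ^ (-(1 / p))) < ⊤)
    (hgα : ∫⁻ t in Ioi (1 : ℝ), ENNReal.ofReal (ginf g θ t ^ (-(1 / α))) < ⊤) (hm : 0 < m) :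
    ∃ (τ κ I : ℝ) (G : ℝ → ℝ), 0 < τ ∧ κ ∈ Ioc 0 1 ∧ Monotone G ∧ (∀ t, G t ≤ I) ∧
      ∀ M, m ≤ M → ∃ H, κ ≤ H ∧ (∀ s ∈ Icc ((1 - τ) * M) ((1 + τ) * M), H ≤ g s) ∧
        ∀ δ, 0 ≤ δ → δ ≤ τ * M →
          G M + δ * ((H * (2 * M)) ^ (-(1 / p)) + H ^ (-(1 / α))) ≤ G (M + δ) := by
  obtain ⟨τ, G, I, hτ, hmono, hI, hstep⟩ :=
    exists_primitive_of_setLIntegral_ginf_lt_top hg hgpos hθ hp hα hgp hgα hm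
  have hI0 : 0 ≤ I := (hI 0).1.trans (hI 0).2
  have hτ0 := hτ.1
  refine ⟨τ, min 1 ((τ * m / (I + 1)) ^ α), I, G, hτ0,
    ⟨lt_min one_pos (by positivity), min_le_left _ _⟩, hmono, fun t => (hI t).2, fun M hM => ?_⟩
  have hM0 : 0 < M := hm.trans_le hM
  have hlow : 0 < (1 - τ) * M := mul_pos (by linarith [hτ.2]) hM0
  obtain ⟨s, hs, hmin⟩ := isCompact_Icc.exists_isMinOn
    (s := Icc ((1 - τ) * M) ((1 + τ) * M)) ⟨M, by nlinarith, by nlinarith⟩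
    (hg.mono fun t ht => hlow.trans_le ht.1)
  have hgs : 0 < g s := hgpos _ (hlow.trans_le hs.1)
  have hstepM := fun δ => hstep M s δ hM hs
  refine ⟨g s, (min_le_right _ _).trans (rpow_div_le_of_mul_rpow_neg_le hα (by positivity) hgs ?_),
    fun t ht => hmin ht, hstepM⟩
  calc τ * m * g s ^ (-(1 / α)) ≤ τ * M * g s ^ (-(1 / α)) := by gcongr
    _ ≤ τ * M * ((g s * (2 * M)) ^ (-(1 / p)) + g s ^ (-(1 / α))) := by
        gcongr
        exact le_add_of_nonneg_left (by positivity)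
    _ ≤ I := by linarith [hstepM (τ * M) (by positivity) le_rfl, (hI M).1, (hI (M + τ * M)).2]

end BoundedPrimitive

section GeometricShells

lemma add_mul_le_of_forall_exists_increment {Φ : ℝ → ℝ} {R l c : ℝ} (hl : 0 < l) (hc : 0 ≤ c)
    (hΦ : MonotoneOn Φ (Ici R))
    (hstep : ∀ r ∈ Icc R (R + l), ∃ ρ ∈ Ioc 0 l, Φ r + c * ρ ≤ Φ (r + ρ)) :
    Φ R + c * l ≤ Φ (R + 2 * l) := by
  set S := {r ∈ Icc R (R + 2 * l) | Φ R + c * (r - R) ≤ Φ r}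
  have hRS : R ∈ S := ⟨⟨le_rfl, by linarith⟩, by simp⟩
  have hbdd : BddAbove S := ⟨R + 2 * l, fun r hr => hr.1.2⟩
  have hR_le : R ≤ sSup S := le_csSup hbdd hRS
  have hle : sSup S ≤ R + 2 * l := csSup_le ⟨R, hRS⟩ fun r hr => hr.1.2
  have hsup : Φ R + c * (sSup S - R) ≤ Φ (sSup S) := by
    have hcont : Tendsto (fun r => Φ R + c * (r - R)) (𝓝[≤] sSup S)
        (𝓝 (Φ R + c * (sSup S - R))) :=
      ((continuous_const.add (continuous_const.mul (continuous_id.sub continuous_const))).tendsto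
        _).mono_left nhdsWithin_le_nhds
    refine le_of_tendsto_of_frequently hcont
      ((isLUB_csSup ⟨R, hRS⟩ hbdd).frequently_mem ⟨R, hRS⟩ |>.mono fun r hr => ?_)
    exact hr.2.trans (hΦ hr.1.1 hR_le (le_csSup hbdd hr))
  have hlt : R + l < sSup S := by
    by_contra! hsup_le
    obtain ⟨ρ, ⟨hρ, hρl⟩, hincr⟩ := hstep _ ⟨hR_le, hsup_le⟩
    have hmem : sSup S + ρ ∈ S := ⟨⟨by linarith, by linarith⟩, by linarith⟩
    linarith [le_csSup hbdd hmem]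
  calc Φ R + c * l ≤ Φ R + c * (sSup S - R) := by gcongr; linarith
    _ ≤ Φ (sSup S) := hsup
    _ ≤ Φ (R + 2 * l) := hΦ hR_le (mem_Ici.2 (by linarith)) hle

lemma exists_ge_forall_ge_lt_add {Φ : ℝ → ℝ} {a c : ℝ} (hbdd : BddAbove (Φ '' Ici a))
    (hc : 0 < c) : ∃ R, a ≤ R ∧ ∀ r, R ≤ r → Φ r < Φ R + c := by
  obtain ⟨_, ⟨R, hR, rfl⟩, hlt⟩ := exists_lt_of_lt_csSup
    (Set.nonempty_Ici.image Φ) (sub_lt_self (sSup (Φ '' Ici a)) hc)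
  refine ⟨R, hR, fun r hr => ?_⟩
  linarith [le_csSup hbdd (mem_image_of_mem Φ (mem_Ici.2 ((mem_Ici.1 hR).trans hr)))]

lemma setLIntegral_Ioi_le_of_forall_Ioc_le {Ψ : ℝ → ℝ} {f : ℝ → ℝ≥0∞} {R I l : ℝ} (hR : 0 < R)
    (hl : 1 < l) (hΨ : MonotoneOn Ψ (Ici R)) (hI : ∀ r, R ≤ r → Ψ r ≤ I)
    (hf : ∀ r, R ≤ r → ∫⁻ t in Ioc r (l * r), f t ≤ ENNReal.ofReal (Ψ (l * r) - Ψ r)) :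
    ∫⁻ t in Ioi R, f t ≤ ENNReal.ofReal (I - Ψ R) := by
  have hle (k : ℕ) : R ≤ l ^ k * R := le_mul_of_one_le_left hR.le (one_le_pow₀ hl.le)
  have hsum (k : ℕ) : ∫⁻ t in Ioc R (l ^ k * R), f t ≤ ENNReal.ofReal (Ψ (l ^ k * R) - Ψ R) := by
    induction k with
    | zero => simp
    | succ k ih =>
      have hstep : l ^ k * R ≤ l * (l ^ k * R) :=
        le_mul_of_one_le_left (hR.le.trans (hle k)) hl.le
      rw [pow_succ', mul_assoc, ← Ioc_union_Ioc_eq_Ioc (hle k) hstep]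
      refine (lintegral_union_le _ _ _).trans ((add_le_add ih (hf _ (hle k))).trans_eq ?_)
      rw [← ENNReal.ofReal_add (sub_nonneg.2 (hΨ self_mem_Ici (hle k) (hle k)))
        (sub_nonneg.2 (hΨ (hle k) ((hle k).trans hstep) hstep))]
      congr 1
      ring
  have hunion : Ioi R = ⋃ k : ℕ, Ioc R (l ^ k * R) := by
    refine Subset.antisymm (fun x hx => ?_) (iUnion_subset fun k => Ioc_subset_Ioi_self)
    obtain ⟨k, hk⟩ := pow_unbounded_of_one_lt (x / R) hl
    exact mem_iUnion.2 ⟨k, hx, ((div_lt_iff₀ hR).1 hk).le⟩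
  have hmono : Monotone fun k : ℕ => Ioc R (l ^ k * R) := fun i j hij =>
    Ioc_subset_Ioc_right (by gcongr; exact hl.le)
  rw [hunion, setLIntegral_iUnion_of_directed _ hmono.directed_le]
  exact iSup_le fun k => (hsum k).trans (ENNReal.ofReal_le_ofReal (by linarith [hI _ (hle k)]))

variable {Φ f : ℝ → ℝ} {R R₁ c e l : ℝ}

lemma setLIntegral_Ioc_ofReal_rpow_le (hR : 0 < R) (hl : 1 < l) (he : 0 ≤ e) (hc : 0 < c)
    (hf : ∀ r, 0 < r → 0 ≤ f r) (hlt : Φ (l * R) < Φ R + c)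
    (hshell : ∀ r ∈ Icc R (l * R), Φ R + c * min (R * (R * f r) ^ e) 1 ≤ Φ (l * R)) :
    ∫⁻ r in Ioc R (l * R), ENNReal.ofReal ((r * f r) ^ e) ≤
      ENNReal.ofReal ((l - 1) * l ^ e / c * (Φ (l * R) - Φ R)) := by
  have hpointwise : ∀ r ∈ Ioc R (l * R),
      (r * f r) ^ e ≤ l ^ e / (c * R) * (Φ (l * R) - Φ R) := by
    intro r hr
    have hr0 : 0 < r := hR.trans hr.1
    have hfr := hf r hr0
    have hmin := hshell r ⟨hr.1.le, hr.2⟩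
    rcases min_choice (R * (R * f r) ^ e) 1 with heq | heq <;> rw [heq] at hmin
    · calc (r * f r) ^ e ≤ (l * (R * f r)) ^ e := by
            rw [← mul_assoc]
            gcongr
            exact hr.2
        _ = l ^ e / (c * R) * (c * (R * (R * f r) ^ e)) := by
            rw [Real.mul_rpow (by positivity) (by positivity)]
            field_simp
        _ ≤ l ^ e / (c * R) * (Φ (l * R) - Φ R) := by gcongr; linarith
    · linarith
  calc _ ≤ ∫⁻ _ in Ioc R (l * R), ENNReal.ofReal (l ^ e / (c * R) * (Φ (l * R) - Φ R)) :=
        setLIntegral_mono measurable_const fun r hr => ENNReal.ofReal_le_ofReal (hpointwise r hr)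
    _ = ENNReal.ofReal (l ^ e / (c * R) * (Φ (l * R) - Φ R)) * ENNReal.ofReal (l * R - R) := by
        rw [setLIntegral_const, Real.volume_Ioc]
    _ = _ := by
        rw [← ENNReal.ofReal_mul' (by nlinarith)]
        congr 1
        field_simp

lemma setLIntegral_Ioi_ofReal_rpow_lt_top {r₀ : ℝ} (hR₁ : 0 < R₁) (hr₀ : 0 < r₀) (hl : 1 < l)
    (he : 0 ≤ e) (hc : 0 < c) (hΦ : MonotoneOn Φ (Ici R₁)) (hbdd : BddAbove (Φ '' Ici R₁))
    (hf : ∀ r, 0 < r → 0 ≤ f r) (hf_bdd : ∀ R, ∃ C, ∀ r ∈ Ioc r₀ R, f r ≤ C)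
    (hshell : ∀ R, R₁ ≤ R → ∀ r ∈ Icc R (l * R),
      Φ R + c * min (R * (R * f r) ^ e) 1 ≤ Φ (l * R)) :
    ∫⁻ r in Ioi r₀, ENNReal.ofReal ((r * f r) ^ e) < ⊤ := by
  obtain ⟨R₀, hR₁₀, hlt⟩ := exists_ge_forall_ge_lt_add hbdd hc
  obtain ⟨I, hI⟩ := hbdd
  have hR₀ : 0 < R₀ := hR₁.trans_le hR₁₀
  have hC : 0 ≤ (l - 1) * l ^ e / c :=
    div_nonneg (mul_nonneg (by linarith) (by positivity)) hc.le
  have htail : ∫⁻ r in Ioi R₀, ENNReal.ofReal ((r * f r) ^ e) < ⊤ := by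
    refine (setLIntegral_Ioi_le_of_forall_Ioc_le (Ψ := fun r => (l - 1) * l ^ e / c * Φ r)
      (I := (l - 1) * l ^ e / c * I) hR₀ hl
      (fun r hr s hs hrs => mul_le_mul_of_nonneg_left
        (hΦ (hR₁₀.trans hr) (hR₁₀.trans hs) hrs) hC) (fun r hr => ?_) fun r hr => ?_).trans_lt
      ENNReal.ofReal_lt_top
    · exact mul_le_mul_of_nonneg_left (hI (mem_image_of_mem Φ (hR₁₀.trans hr))) hC
    · have hr_pos : 0 < r := hR₀.trans_le hr
      have hlr : R₀ ≤ l * r := hr.trans (le_mul_of_one_le_left hr_pos.le hl.le)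
      rw [← mul_sub]
      refine setLIntegral_Ioc_ofReal_rpow_le hr_pos hl he hc hf ?_ (hshell r (hR₁₀.trans hr))
      exact (hlt _ hlr).trans_le
        (add_le_add_left (hΦ hR₁₀ (hR₁₀.trans hr) hr) c)
  obtain ⟨B, hB⟩ := hf_bdd R₀
  refine setLIntegral_Ioi_ofReal_lt_top_of_le htail (C := (R₀ * B) ^ e) fun r hr => ?_
  have hr_pos : 0 < r := hr₀.trans hr.1
  have hfr := hf r hr_pos
  exact Real.rpow_le_rpow (by positivity) (mul_le_mul hr.2 (hB r hr) hfr hR₀.le) he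

end GeometricShells

section Rise

variable {E : Type*} [NormedAddCommGroup E] [InnerProductSpace ℝ E] [FiniteDimensional ℝ E]
  [MeasurableSpace E] [BorelSpace E] {p C₁ C₂ s : ℝ}

lemma exists_mem_ball_add_lt (hs : (Module.finrank ℝ E : ℝ).HolderConjugate s)
    (hC₁ : 0 < C₁) (hC₂ : 0 ≤ C₂) :
    ∃ K : ℝ, 1 ≤ K ∧ ∀ {α h δ ρ : ℝ} {F : E → E} {a b u : E → ℝ} {z : E},
      IsSubsolution p C₁ C₂ α F a b u → 0 ≤ h → 0 < δ → 0 < ρ →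
      (∀ᵐ x, x ∈ ball z ρ → b x * δ * (δ / ρ) ^ (α - p) ≤ C₁ / 4) →
      (∀ᵐ x, x ∈ ball z ρ → u x ∈ Icc (u z - δ) (u z + δ) → h ≤ a x) →
      K * δ ^ (p - 1) < h * ρ ^ p → ∃ y ∈ ball z ρ, u z + δ < u y := by
  obtain ⟨K, hK, hgrowth⟩ := exists_mul_rpow_le_mul_rpow_sub_one (p := p) hs hC₁ hC₂
  refine ⟨K, hK, fun {α h δ ρ F a b u z} D hh hδ hρ hb ha hlt => ?_⟩
  by_contra! hub
  refine hlt.not_ge (hgrowth D hh hδ hρ (k := u z - δ) (fun x hx => ?_) (by ring) hb ?_)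
  · linarith [hub x hx]
  · filter_upwards [ha] with x hx hxz hlow using hx hxz ⟨hlow.le, hub x hxz⟩

end Rise

section EssentialBounds

variable {X : Type*} [MeasurableSpace X] {μ : Measure X} {f : X → ℝ} {s : Set X} {C : ℝ}

lemma ae_essInf_restrict_le (hs : MeasurableSet s) (hf : ∀ x, 0 ≤ f x) :
    ∀ᵐ x ∂μ, x ∈ s → essInf f (μ.restrict s) ≤ f x :=
  (ae_restrict_iff' hs).1 (ae_essInf_le (isBoundedUnder_of ⟨0, hf⟩))

lemma ae_le_essSup_restrict (hs : MeasurableSet s) (hC : ∀ x ∈ s, f x ≤ C) :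
    ∀ᵐ x ∂μ, x ∈ s → f x ≤ essSup f (μ.restrict s) :=
  (ae_restrict_iff' hs).1 (ae_le_essSup ⟨C, (ae_restrict_iff' hs).2 (.of_forall hC)⟩)

lemma essInf_restrict_mem_Icc (hs : MeasurableSet s) (hμ : μ s ≠ 0) (hf : ∀ x, 0 ≤ f x)
    (hC : ∀ x ∈ s, f x ≤ C) : essInf f (μ.restrict s) ∈ Icc 0 C := by
  have : NeBot (ae (μ.restrict s)) := ae_neBot.2 (Measure.restrict_eq_zero.not.2 hμ)
  have hbdd : IsBoundedUnder (· ≤ ·) (ae (μ.restrict s)) f :=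
    ⟨C, (ae_restrict_iff' hs).2 (.of_forall hC)⟩
  refine ⟨le_liminf_of_le hbdd.isCoboundedUnder_ge (.of_forall hf), ?_⟩
  obtain ⟨x, hx, hxs⟩ :=
    ((ae_essInf_le (isBoundedUnder_of ⟨0, hf⟩)).and (ae_restrict_mem (μ := μ) hs)).exists
  exact hx.trans (hC x hxs)

lemma essSup_restrict_nonneg (hs : MeasurableSet s) (hμ : μ s ≠ 0) (hf : ∀ x, 0 ≤ f x)
    (hC : ∀ x ∈ s, f x ≤ C) : 0 ≤ essSup f (μ.restrict s) := by
  have : NeBot (ae (μ.restrict s)) := ae_neBot.2 (Measure.restrict_eq_zero.not.2 hμ)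
  obtain ⟨x, hx⟩ :=
    (ae_le_essSup (μ := μ.restrict s) ⟨C, (ae_restrict_iff' hs).2 (.of_forall hC)⟩).exists
  exact (hf x).trans hx

end EssentialBounds

section Annuli

variable {n : ℕ} {p α σ r : ℝ} {q b f : Euc n → ℝ}

lemma nontrivial_Euc (hn : 2 ≤ n) : Nontrivial (Euc n) := by
  have : Nonempty (Fin n) := ⟨⟨0, by omega⟩⟩
  infer_instance

lemma holderConjugate_finrank_Euc (hn : 2 ≤ n) :
    (Module.finrank ℝ (Euc n) : ℝ).HolderConjugate (Real.conjExponent n) := by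
  rw [finrank_euclideanSpace_fin]
  exact .conjExponent (by exact_mod_cast hn)

lemma isOpen_Ann (r₁ r₂ : ℝ) : IsOpen (Ann n r₁ r₂) :=
  (isOpen_lt continuous_const continuous_norm).inter (isOpen_lt continuous_norm continuous_const)

lemma volume_Ann_ne_zero (hn : 2 ≤ n) (hσ : 1 < σ) (hr : 0 < r) :
    volume (Ann n (r / σ) (σ * r)) ≠ 0 := by
  have := nontrivial_Euc hn
  obtain ⟨z, hz⟩ := (NormedSpace.sphere_nonempty (x := (0 : Euc n))).2 hr.le
  rw [mem_sphere_zero_iff_norm] at hz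
  exact ((isOpen_Ann _ _).measure_pos volume
    ⟨z, by rw [hz]; exact div_lt_self hr hσ, by rw [hz]; exact lt_mul_left hr hσ⟩).ne'

lemma LocBdd.exists_forall_mem_Ann_le (hf : LocBdd f) (r₂ : ℝ) :
    ∃ C, ∀ r₁, ∀ r' ≤ r₂, ∀ x ∈ Ann n r₁ r', f x ≤ C := by
  obtain ⟨C, hC⟩ := hf _ (isCompact_closedBall 0 r₂)
  exact ⟨C, fun r₁ r' hr' x hx => hC x (mem_closedBall_zero_iff.2 (hx.2.le.trans hr'))⟩

lemma LocBdd.rpow (hb : LocBdd b) (hb0 : ∀ x, 0 ≤ b x) {e : ℝ} (he : 0 ≤ e) :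
    LocBdd fun x => b x ^ e := by
  intro K hK
  obtain ⟨C, hC⟩ := hb K hK
  exact ⟨C ^ e, fun x hx => Real.rpow_le_rpow (hb0 x) (hC x hx) he⟩

lemma exists_forall_ball_subset_Ann (n : ℕ) (hσ : 1 < σ) :
    ∃ ω, 0 < ω ∧ ∀ {R r ρ : ℝ} {z : Euc n}, 0 < R → r ∈ Icc R ((1 + 2 * ω) * R) →
      ‖z‖ ∈ Icc R (R + ω * R) → ρ ≤ ω * R → ball z ρ ⊆ Ann n (r / σ) (σ * r) := by
  obtain ⟨ω, hω⟩ : ∃ ω, ω * (2 * (σ + 2)) = σ - 1 := ⟨_, div_mul_cancel₀ _ (by linarith)⟩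
  have hω_pos : 0 < ω := by nlinarith
  refine ⟨ω, hω_pos, fun {R r ρ z} hR hr hz hρ x hx => ?_⟩
  have hxz : ‖x - z‖ < ρ := mem_ball_iff_norm.1 hx
  have hlow := norm_sub_norm_le z x
  have hup := norm_sub_norm_le x z
  rw [norm_sub_rev] at hlow
  constructor
  · rw [div_lt_iff₀ (by linarith)]
    calc r ≤ (1 + 2 * ω) * R := hr.2
      _ ≤ (1 - ω) * R * σ := by nlinarith
      _ < ‖x‖ * σ := by gcongr; linarith [hz.1]
  · calc ‖x‖ < (1 + 2 * ω) * R := by linarith [hz.2]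
      _ ≤ σ * R := by gcongr; nlinarith
      _ ≤ σ * r := by gcongr; exact hr.1

/-- The quantity `ess sup_{r/σ < |x| < σr} b(x)^{(p-1)/α}` in the denominator of `f_σ(r)`, see
`fdef`. -/
def bsup (b : Euc n → ℝ) (p α σ r : ℝ) : ℝ :=
  essSup (fun x => b x ^ ((p - 1) / α)) (volume.restrict (Ann n (r / σ) (σ * r)))

lemma qinf_mem_Icc (hn : 2 ≤ n) (hσ : 1 < σ) (hr : 0 < r) (hq : ∀ x, 0 ≤ q x) {C : ℝ}
    (hC : ∀ x ∈ Ann n (r / σ) (σ * r), q x ≤ C) : qinf q σ r ∈ Icc 0 C :=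
  essInf_restrict_mem_Icc (isOpen_Ann _ _).measurableSet (volume_Ann_ne_zero hn hσ hr) hq hC

lemma ae_qinf_le (hq : ∀ x, 0 ≤ q x) :
    ∀ᵐ x, x ∈ Ann n (r / σ) (σ * r) → qinf q σ r ≤ q x :=
  ae_essInf_restrict_le (isOpen_Ann _ _).measurableSet hq

lemma ae_rpow_le_bsup (hb : LocBdd b) (hb0 : ∀ x, 0 ≤ b x) (he : 0 ≤ (p - 1) / α) :
    ∀ᵐ x, x ∈ Ann n (r / σ) (σ * r) → b x ^ ((p - 1) / α) ≤ bsup b p α σ r := by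
  obtain ⟨C, hC⟩ := (hb.rpow hb0 he).exists_forall_mem_Ann_le (σ * r)
  exact ae_le_essSup_restrict (isOpen_Ann _ _).measurableSet (hC _ _ le_rfl)

lemma bsup_nonneg (hn : 2 ≤ n) (hσ : 1 < σ) (hr : 0 < r) (hb : LocBdd b) (hb0 : ∀ x, 0 ≤ b x)
    (he : 0 ≤ (p - 1) / α) : 0 ≤ bsup b p α σ r := by
  obtain ⟨C, hC⟩ := (hb.rpow hb0 he).exists_forall_mem_Ann_le (σ * r)
  exact essSup_restrict_nonneg (isOpen_Ann _ _).measurableSet (volume_Ann_ne_zero hn hσ hr)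
    (fun x => Real.rpow_nonneg (hb0 x) _) (hC _ _ le_rfl)

lemma fdef_le_qinf_div {R : ℝ} (hQ : 0 ≤ qinf q σ r) (hβ : 0 ≤ bsup b p α σ r) (hR : 0 ≤ R)
    (hr : R ≤ r) :
    fdef q b p α σ r ≤
      qinf q σ r / (1 + R * qinf q σ r ^ ((α - p + 1) / α) * bsup b p α σ r) := by
  unfold fdef
  rw [← bsup]
  gcongr

lemma fdef_mem_Icc_qinf (hQ : 0 ≤ qinf q σ r) (hβ : 0 ≤ bsup b p α σ r) (hr : 0 ≤ r) :
    fdef q b p α σ r ∈ Icc 0 (qinf q σ r) := by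
  have hden : 0 ≤ r * qinf q σ r ^ ((α - p + 1) / α) * bsup b p α σ r := by positivity
  exact ⟨div_nonneg hQ (add_nonneg zero_le_one hden),
    div_le_self hQ (le_add_of_nonneg_right hden)⟩

lemma exists_forall_fdef_mem_Icc (hn : 2 ≤ n) (hσ : 1 < σ) (hq : LocBdd q) (hq0 : ∀ x, 0 ≤ q x)
    (hb : LocBdd b) (hb0 : ∀ x, 0 ≤ b x) (he : 0 ≤ (p - 1) / α) (R : ℝ) :
    ∃ C, ∀ r ∈ Ioc 0 R, fdef q b p α σ r ∈ Icc 0 C := by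
  obtain ⟨C, hC⟩ := hq.exists_forall_mem_Ann_le (σ * R)
  refine ⟨C, fun r hr => ?_⟩
  have hσr : σ * r ≤ σ * R := by gcongr; exact hr.2
  have hQ := qinf_mem_Icc hn hσ hr.1 hq0 (hC _ _ hσr)
  have hf := fdef_mem_Icc_qinf hQ.1 (bsup_nonneg hn hσ hr.1 hb hb0 he) hr.1.le
  exact ⟨hf.1, hf.2.trans hQ.2⟩

end Annuli

section SphericalMaximum

variable {n : ℕ} {p C₁ C₂ α r : ℝ} {F : Euc n → Euc n} {a b u : Euc n → ℝ}

lemma exists_norm_eq_sphMax_eq (hn : 2 ≤ n) (hu : Continuous u) (hr : 0 ≤ r) :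
    ∃ z, ‖z‖ = r ∧ sphMax u r = u z := by
  have := nontrivial_Euc hn
  obtain ⟨z, hz, hmax⟩ := (isCompact_sphere (0 : Euc n) r).exists_sSup_image_eq
    (NormedSpace.sphere_nonempty.2 hr) hu.continuousOn
  exact ⟨z, mem_sphere_zero_iff_norm.1 hz, hmax⟩

lemma IsSubsolution.le_sphMax (D : IsSubsolution p C₁ C₂ α F a b u) (hn : 2 ≤ n) (hr : 0 < r)
    {x : Euc n} (hx : ‖x‖ ≤ r) : u x ≤ sphMax u r := by
  have hsphere : ∀ y ∈ sphere (0 : Euc n) r, u y ≤ sphMax u r := fun y hy =>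
    le_csSup ((isCompact_sphere _ _).image D.contDiff.continuous).bddAbove (mem_image_of_mem u hy)
  rcases hx.lt_or_eq with hlt | heq
  · refine D.le_of_forall_mem_frontier_le (holderConjugate_finrank_Euc hn) isOpen_ball ?_ ?_ x
      (mem_ball_zero_iff.2 hlt)
    · rw [closure_ball _ hr.ne']
      exact isCompact_closedBall _ _
    · rwa [frontier_ball _ hr.ne']
  · exact hsphere x (mem_sphere_zero_iff_norm.2 heq)

lemma IsSubsolution.monotoneOn_sphMax (D : IsSubsolution p C₁ C₂ α F a b u) (hn : 2 ≤ n) :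
    MonotoneOn (sphMax u) (Ioi 0) := by
  intro r hr t ht hrt
  obtain ⟨z, hz, hmax⟩ := exists_norm_eq_sphMax_eq hn D.contDiff.continuous (le_of_lt hr)
  exact hmax.trans_le (D.le_sphMax hn ht (hz.trans_le hrt))

end SphericalMaximum

section Liouville

variable {n : ℕ} {p C₁ C₂ α θ σ r₀ : ℝ} {A : Euc n → Euc n → Euc n} {F : Euc n → Euc n}
  {b q u f : Euc n → ℝ} {g : ℝ → ℝ} {x₀ : Euc n}

lemma LocBdd.locallyIntegrable_mul (hb : LocBdd b) (hbm : Measurable b) (hb0 : ∀ x, 0 ≤ b x)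
    (hf : Continuous f) : LocallyIntegrable fun x => b x * f x := by
  refine locallyIntegrable_of_bounded_on_compacts
    (hbm.mul hf.measurable).aestronglyMeasurable fun K hK => ?_
  obtain ⟨B, hB⟩ := hb K hK
  obtain ⟨C, hC⟩ := hK.exists_bound_of_continuousOn hf.continuousOn
  refine ⟨B * C, fun x hx => ?_⟩
  rw [norm_mul, Real.norm_of_nonneg (hb0 x)]
  exact mul_le_mul (hB x hx) (hC x hx) (norm_nonneg _) ((hb0 x).trans (hB x hx))

lemma StructCond.locallyIntegrable_comp_gradient (hA : StructCond A p C₁ C₂) (hp : 1 ≤ p)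
    (hu : ContDiff ℝ 1 u) : LocallyIntegrable fun x => A x (∇ u x) := by
  have hgrad := continuous_gradient hu
  refine locallyIntegrable_of_bounded_on_compacts
    (hA.1.comp (measurable_id.prodMk hgrad.measurable)).aestronglyMeasurable fun K hK => ?_
  obtain ⟨C, hC⟩ := (hK.image hgrad).isBounded.exists_norm_le
  refine ⟨|C₂| * C ^ (p - 1), fun x hx => ((hA.2 x _).2).trans ?_⟩
  have hgradC := hC _ (mem_image_of_mem _ hx)
  gcongr
  exact le_abs_self C₂

lemma isSubsolution_of_isWeakSol (hp : 1 < p) (hC₁ : 0 < C₁) (hC₂ : 0 ≤ C₂) (hα₁ : p - 1 ≤ α)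
    (hα₂ : α ≤ p) (hA : StructCond A p C₁ C₂) (hbm : Measurable b) (hb0 : ∀ x, 0 ≤ b x)
    (hb : LocBdd b) (hqm : Measurable q) (hq0 : ∀ x, 0 ≤ q x) (hq : LocBdd q)
    (hg : ContinuousOn g (Ici 0)) (hg0 : ∀ t ∈ Ici (0 : ℝ), 0 ≤ g t) (hu : ContDiff ℝ 1 u)
    (hu0 : ∀ x, 0 ≤ u x) (hsol : IsWeakSol A b α (fun x => q x * g (u x)) univ u) :
    IsSubsolution p C₁ C₂ α (fun x => A x (∇ u x)) (fun x => q x * g (u x)) b u := by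
  have hF := hA.locallyIntegrable_comp_gradient hp.le hu
  have hqg : LocallyIntegrable fun x => q x * g (u x) :=
    hq.locallyIntegrable_mul hqm hq0 (hg.comp_continuous hu.continuous hu0)
  have hbgrad := hb.locallyIntegrable_mul hbm hb0 ((continuous_gradient hu).norm.rpow_const
    (p := α) fun x => .inr (by linarith))
  refine ⟨hp, hC₁, hC₂, hα₁, hα₂, hu, fun x => (hA.2 x _).1, fun x => (hA.2 x _).2,
    fun x => mul_nonneg (hq0 x) (hg0 _ (hu0 x)), hb0, hb, hF, hqg.sub hbgrad, fun φ =>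
    integral_mul_add_inner_gradient_nonpos_of_smooth (hqg.sub hbgrad) hF fun ψ hψ hc hψ0 => ?_⟩
  have hqψ := integrable_mul_of_hasCompactSupport hqg hψ.continuous hc
  have hbψ := integrable_mul_of_hasCompactSupport hbgrad hψ.continuous hc
  have hFψ := integrable_inner_gradient hF (hψ.of_le (by norm_cast)) hc
  have hweak := hsol ψ hψ hc (subset_univ _) hψ0
  simp only [setIntegral_univ] at hweak
  simp only [sub_mul]
  rw [integral_add (hqψ.sub' hbψ) hFψ, integral_sub hqψ hbψ]
  linarith

/- At a point `z` of the sphere where `u` is maximal, the growth estimate forces `u` to exceed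
`u z + δ` in the ball of radius `ρ`, hence the spherical maximum to do so at radius `s + ρ`. -/
lemma IsSubsolution.exists_forall_exists_increment
    (D : IsSubsolution p C₁ C₂ α F (fun x => q x * g (u x)) b u) (hn : 2 ≤ n)
    (hq0 : ∀ x, 0 ≤ q x) (hg : ContinuousOn g (Ioi 0)) (hgpos : ∀ t, 0 < t → 0 < g t) (hθ : 1 < θ)
    (hgp : ∫⁻ t in Ioi (1 : ℝ), ENNReal.ofReal ((ginf g θ t * t) ^ (-(1 / p))) < ⊤)
    (hgα : ∫⁻ t in Ioi (1 : ℝ), ENNReal.ofReal (ginf g θ t ^ (-(1 / α))) < ⊤)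
    (hx₀ : 0 < u x₀) {ω : ℝ} (hω : 0 < ω) :
    ∃ G I c, Monotone G ∧ (∀ t, G t ≤ I) ∧ 0 < c ∧ ∀ {R Q β s : ℝ},
      0 < R → 0 < Q → 0 ≤ β → 0 < s → ‖x₀‖ ≤ s →
      (∀ z : Euc n, ‖z‖ = s → ∀ᵐ x, x ∈ ball z (ω * R) →
        Q ≤ q x ∧ b x ^ ((p - 1) / α) ≤ β) →
      ∃ ρ ∈ Ioc 0 (ω * R), G (sphMax u s) + c * (ρ / R) *
          min (R * (R * (Q / (1 + R * Q ^ ((α - p + 1) / α) * β))) ^ (1 / (p - 1))) 1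
        ≤ G (sphMax u (s + ρ)) := by
  have hp := D.one_lt_p
  have hα : 0 < α := by linarith [D.p_sub_one_le_α]
  obtain ⟨τ, κ, I, G, hτ, hκ, hGmono, hGI, hG⟩ :=
    exists_primitive_add_mul_le hg hgpos hθ (by linarith) hα hgp hgα hx₀
  obtain ⟨K, hK, hrise⟩ := exists_mem_ball_add_lt (p := p) (holderConjugate_finrank_Euc hn)
    D.C₁_pos D.C₂_nonneg
  obtain ⟨c, hc, hstep⟩ :=
    exists_radius_increment hp D.p_sub_one_le_α D.C₁_pos hK hτ hκ.1 hκ.2 hω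
  refine ⟨G, I, c, hGmono, hGI, hc, fun {R Q β s} hR hQ hβ hs hxs hae => ?_⟩
  have hm := D.le_sphMax hn hs hxs
  obtain ⟨z, hz, hmax⟩ := exists_norm_eq_sphMax_eq hn D.contDiff.continuous hs.le
  obtain ⟨H, hκH, hH, hGδ⟩ := hG _ hm
  obtain ⟨ρ, δ, hρ, hρR, hδ, hδτ, hsmall, hlarge, hmin⟩ :=
    hstep R Q β (sphMax u s) H hR hQ hβ (hx₀.trans_le hm) hκH
  have hH0 : 0 ≤ H := hκ.1.le.trans hκH
  obtain ⟨y, hy, hyu⟩ : ∃ y ∈ ball z ρ, u z + δ < u y := by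
    refine hrise D (mul_nonneg hQ.le hH0) hδ hρ ?_ ?_ hlarge <;>
      filter_upwards [hae z hz] with x hx hxz <;>
      obtain ⟨hqx, hbx⟩ := hx (ball_subset_ball hρR hxz)
    · have hb : b x ≤ β ^ (α / (p - 1)) := by
        rw [← inv_div]
        exact (Real.le_rpow_inv_iff_of_pos (D.b_nonneg x) hβ (div_pos (by linarith) hα)).2 hbx
      exact hsmall.trans' (by gcongr)
    · intro hux
      rw [← hmax] at hux
      refine mul_le_mul hqx (hH _ ⟨?_, ?_⟩) hH0 (hq0 x) <;> linarith [hux.1, hux.2]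
  refine ⟨ρ, ⟨hρ, hρR⟩, ?_⟩
  have hys : ‖y‖ ≤ s + ρ := by linarith [mem_ball_iff_norm.1 hy, norm_sub_norm_le y z]
  have hjump : sphMax u s + δ ≤ sphMax u (s + ρ) :=
    (hmax ▸ hyu.le).trans (D.le_sphMax hn (by positivity) hys)
  linarith [hGδ δ hδ.le hδτ, hGmono hjump]

lemma IsSubsolution.exists_forall_shell_increment
    (D : IsSubsolution p C₁ C₂ α F (fun x => q x * g (u x)) b u) (hn : 2 ≤ n)
    (hq0 : ∀ x, 0 ≤ q x) (hq : LocBdd q) (hg : ContinuousOn g (Ioi 0))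
    (hgpos : ∀ t, 0 < t → 0 < g t) (hθ : 1 < θ) (hσ : 1 < σ)
    (hgp : ∫⁻ t in Ioi (1 : ℝ), ENNReal.ofReal ((ginf g θ t * t) ^ (-(1 / p))) < ⊤)
    (hgα : ∫⁻ t in Ioi (1 : ℝ), ENNReal.ofReal (ginf g θ t ^ (-(1 / α))) < ⊤)
    (hx₀ : 0 < u x₀) :
    ∃ G I c l, Monotone G ∧ (∀ t, G t ≤ I) ∧ 0 < c ∧ 1 < l ∧ ∀ R, 0 < R → ‖x₀‖ ≤ R →
      ∀ r ∈ Icc R (l * R), G (sphMax u R)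
        + c * min (R * (R * fdef q b p α σ r) ^ (1 / (p - 1))) 1 ≤ G (sphMax u (l * R)) := by
  have hp := D.one_lt_p
  have he : 0 ≤ (p - 1) / α := div_nonneg (by linarith) (by linarith [D.p_sub_one_le_α])
  obtain ⟨ω, hω, hball⟩ := exists_forall_ball_subset_Ann n hσ
  obtain ⟨G, I, c, hGmono, hGI, hc, hstep⟩ :=
    D.exists_forall_exists_increment hn hq0 hg hgpos hθ hgp hgα hx₀ hω
  refine ⟨G, I, c * ω, 1 + 2 * ω, hGmono, hGI, by positivity, by linarith,
    fun R hR hxR r hr => ?_⟩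
  have hr_pos : 0 < r := hR.trans_le hr.1
  have hΦ : MonotoneOn (fun s => G (sphMax u s)) (Ici R) := fun s hs t ht hst =>
    hGmono (D.monotoneOn_sphMax hn (hR.trans_le hs) (hR.trans_le ht) hst)
  have hβ : 0 ≤ bsup b p α σ r := bsup_nonneg hn hσ hr_pos D.b_bddOn_compact D.b_nonneg he
  obtain ⟨C, hC⟩ := hq.exists_forall_mem_Ann_le (σ * r)
  rcases (qinf_mem_Icc hn hσ hr_pos hq0 (hC _ _ le_rfl)).1.eq_or_lt with hQ | hQ
  · have hexp : (p - 1)⁻¹ ≠ 0 := inv_ne_zero (by linarith)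
    simpa [fdef, ← hQ, Real.zero_rpow hexp] using
      hΦ self_mem_Ici (hr.1.trans hr.2) (hr.1.trans hr.2)
  have hf := fdef_le_qinf_div hQ.le hβ hR.le hr.1
  have hf0 := (fdef_mem_Icc_qinf hQ.le hβ hr_pos.le).1
  set f := qinf q σ r / (1 + R * qinf q σ r ^ ((α - p + 1) / α) * bsup b p α σ r)
  set m := min (R * (R * f) ^ (1 / (p - 1))) 1 with hm
  have hshell := add_mul_le_of_forall_exists_increment (l := ω * R) (c := c * m / R)
    (by positivity) (by positivity) hΦ fun s hs => by
      obtain ⟨ρ, hρ, hle⟩ := hstep hR hQ hβ (hR.trans_le hs.1) (hxR.trans hs.1) fun z hz => by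
        filter_upwards [ae_qinf_le hq0, ae_rpow_le_bsup D.b_bddOn_compact D.b_nonneg he]
          with x hqx hbx hxz
        have hxA := hball hR hr (hz ▸ hs) le_rfl hxz
        exact ⟨hqx hxA, hbx hxA⟩
      exact ⟨ρ, hρ, hle.trans' (by rw [hm]; apply le_of_eq; ring)⟩
  calc _ ≤ G (sphMax u R) + c * ω * m := by
        rw [hm]
        gcongr
    _ = G (sphMax u R) + c * m / R * (ω * R) := by field_simp
    _ ≤ G (sphMax u (R + 2 * (ω * R))) := hshell
    _ = _ := by ring_nf

theorem IsSubsolution.setLIntegral_rpow_fdef_lt_top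
    (D : IsSubsolution p C₁ C₂ α F (fun x => q x * g (u x)) b u) (hn : 2 ≤ n)
    (hq0 : ∀ x, 0 ≤ q x) (hq : LocBdd q) (hg : ContinuousOn g (Ioi 0))
    (hgpos : ∀ t, 0 < t → 0 < g t) (hθ : 1 < θ) (hσ : 1 < σ) (hr₀ : 0 < r₀)
    (hgp : ∫⁻ t in Ioi (1 : ℝ), ENNReal.ofReal ((ginf g θ t * t) ^ (-(1 / p))) < ⊤)
    (hgα : ∫⁻ t in Ioi (1 : ℝ), ENNReal.ofReal (ginf g θ t ^ (-(1 / α))) < ⊤)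
    (hx₀ : 0 < u x₀) :
    ∫⁻ r in Ioi r₀, ENNReal.ofReal ((r * fdef q b p α σ r) ^ (1 / (p - 1))) < ⊤ := by
  obtain ⟨G, I, c, l, hGmono, hGI, hc, hl, hshell⟩ :=
    D.exists_forall_shell_increment hn hq0 hq hg hgpos hθ hσ hgp hgα hx₀
  have hp := D.one_lt_p
  have hR₁ : 0 < max 1 ‖x₀‖ := lt_max_of_lt_left one_pos
  have hbound := exists_forall_fdef_mem_Icc (p := p) (α := α) hn hσ hq hq0 D.b_bddOn_compact
    D.b_nonneg (div_nonneg (by linarith) (by linarith [D.p_sub_one_le_α]))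
  refine setLIntegral_Ioi_ofReal_rpow_lt_top (Φ := fun s => G (sphMax u s)) hR₁ hr₀ hl
    (one_div_nonneg.2 (by linarith)) hc (fun s hs t ht hst => ?_)
    ⟨I, forall_mem_image.2 fun _ _ => hGI _⟩ (fun r hr => ?_) (fun R => ?_) fun R hR =>
    hshell R (hR₁.trans_le hR) ((le_max_right _ _).trans hR)
  · exact hGmono (D.monotoneOn_sphMax hn (hR₁.trans_le hs) (hR₁.trans_le ht) hst)
  · obtain ⟨C, hC⟩ := hbound r
    exact (hC r ⟨hr, le_rfl⟩).1
  · obtain ⟨C, hC⟩ := hbound R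
    exact ⟨C, fun r hr => (hC r ⟨hr₀.trans hr.1, hr.2⟩).2⟩

end Liouville

/-- Theorem 2.1 (blow-up / Liouville): under the convergence conditions on `g_θ` and the
divergence condition on `f_σ`, every nonnegative solution of
`div A(x,Du) + b(x)|Du|^α ≥ q(x) g(u)` in `ℝⁿ` is identically zero. -/
theorem stmt_0 (n : ℕ) (hn : 2 ≤ n) (p C₁ C₂ α : ℝ) (hp : 1 < p)
    (hC₁ : 0 < C₁) (hC₂ : 0 < C₂) (hα₁ : p - 1 ≤ α) (hα₂ : α ≤ p)
    (A : Euc n → Euc n → Euc n) (hA : StructCond A p C₁ C₂)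
    (b : Euc n → ℝ) (hbm : Measurable b) (hb0 : ∀ x, 0 ≤ b x) (hbloc : LocBdd b)
    (q : Euc n → ℝ) (hqm : Measurable q) (hq0 : ∀ x, 0 ≤ q x) (hqloc : LocBdd q)
    (g : ℝ → ℝ) (hg : ContinuousOn g (Set.Ici 0)) (hg0 : ∀ t ∈ Set.Ici (0 : ℝ), 0 ≤ g t)
    (hgpos : ∀ t : ℝ, 0 < t → 0 < g t)
    (θ σ r₀ : ℝ) (hθ : 1 < θ) (hσ : 1 < σ) (hr₀ : 0 < r₀)
    (h1 : (∫⁻ t in Set.Ioi (1 : ℝ), ENNReal.ofReal ((ginf g θ t * t) ^ (-(1 / p)))) < ⊤)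
    (h2 : (∫⁻ t in Set.Ioi (1 : ℝ), ENNReal.ofReal (ginf g θ t ^ (-(1 / α)))) < ⊤)
    (h3 : (∫⁻ r in Set.Ioi r₀, ENNReal.ofReal ((r * fdef q b p α σ r) ^ (1 / (p - 1)))) = ⊤)
    (u : Euc n → ℝ) (hu : ContDiff ℝ 1 u) (hu0 : ∀ x, 0 ≤ u x)
    (hsol : IsWeakSol A b α (fun x => q x * g (u x)) Set.univ u) :
    ∀ x, u x = 0 := by
  intro x₀
  by_contra hne
  have hx₀ : 0 < u x₀ := (hu0 x₀).lt_of_ne' hne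
  have D := isSubsolution_of_isWeakSol hp hC₁ hC₂.le hα₁ hα₂ hA hbm hb0 hbloc hqm hq0 hqloc hg hg0
    hu hu0 hsol
  exact (D.setLIntegral_rpow_fdef_lt_top hn hq0 hqloc (hg.mono Ioi_subset_Ici_self) hgpos hθ hσ hr₀
    h1 h2 hx₀).ne h3
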